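/- arXiv:1905.09410 — 2 statements merged into one kernel-verified Lean document; each statement's English description precedes it below -/
import Mathlib

section
/- Let d ≥ 3, 1 ≤ α < d/2 and suppose 𝔼[z(0)] < ∞. Then for every R > 0, ℙ-almost surely, inf over x ∈ ℤ^{1+d} with |x| ≤ R t^{1/2} of P^ω₀(X_t = x) / P̄₀(X_t = x) tends to 0 as t → ∞, where P̄₀(X_t = x) := P₀((S¹_{𝔼[z(0)]·t}, S²_t) = x) is the transition probability of the walk in the averaged conductance 𝔼[ω]; in particular the quenched local central limit theorem fails. -/
open MeasureTheory ProbabilityTheory Filter Set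

noncomputable section

/-- `n`-step transition probabilities of the discrete-time simple random walk on `ℤ^m`. -/
def srwKernel (m : ℕ) : ℕ → (Fin m → ℤ) → (Fin m → ℤ) → ℝ
  | 0, x, y => if x = y then 1 else 0
  | n + 1, x, y =>
      (∑ i : Fin m, (srwKernel m n (Function.update x i (x i + 1)) y
        + srwKernel m n (Function.update x i (x i - 1)) y)) / (2 * m)

/-- Transition kernel of the continuous-time simple random walk on `ℤ^m` which jumps to
each of its `2m` nearest neighbours at rate `1` (total jump rate `2m`). -/
def heatKernel (m : ℕ) (t : ℝ) (x y : Fin m → ℤ) : ℝ :=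
  ∑' n : ℕ, Real.exp (-(2 * m) * t) * ((2 * m) * t) ^ n / n.factorial * srwKernel m n x y

/-- `(P, S)` is (a realization of) the continuous-time simple random walk on `ℤ^m`:
under `P x` the process `S` starts at `x`, has right-continuous (piecewise constant)
paths, and its finite-dimensional distributions are given by the heat kernel. -/
structure IsCTSRW (m : ℕ) {Ω : Type*} [MeasurableSpace Ω]
    (P : (Fin m → ℤ) → Measure Ω) (S : ℝ → Ω → (Fin m → ℤ)) : Prop where
  prob : ∀ x, IsProbabilityMeasure (P x)
  meas : Measurable fun p : ℝ × Ω => S p.1 p.2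
  start : ∀ x, ∀ᵐ ω ∂ P x, S 0 ω = x
  rightCont : ∀ x, ∀ᵐ ω ∂ P x, ∀ t : ℝ, 0 ≤ t →
    ∃ ε > (0 : ℝ), ∀ u, t ≤ u → u < t + ε → S u ω = S t ω
  fdd : ∀ x (n : ℕ) (t : Fin (n + 1) → ℝ), 0 ≤ t 0 →
    (∀ i : Fin n, t i.castSucc ≤ t i.succ) →
    ∀ y : Fin (n + 1) → (Fin m → ℤ),
      (P x {ω | ∀ i, S (t i) ω = y i}).toReal
        = heatKernel m (t 0) x (y 0)
          * ∏ i : Fin n, heatKernel m (t i.succ - t i.castSucc) (y i.castSucc) (y i.succ)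

/-- `z` is an i.i.d. nonnegative random scenery on `ℤ^d` whose common upper tail decays
like `r^{-α+o(1)}`. -/
structure IsScenery (d : ℕ) (α : ℝ) {Ω : Type*} [MeasurableSpace Ω]
    (μ : Measure Ω) (z : (Fin d → ℤ) → Ω → ℝ) : Prop where
  prob : IsProbabilityMeasure μ
  meas : ∀ x, Measurable (z x)
  nonneg : ∀ x ω, 0 ≤ z x ω
  indep : iIndepFun z μ
  ident : ∀ x, IdentDistrib (z x) (z 0) μ μ
  tail : Tendsto (fun r : ℝ => Real.log (μ {ω | r < z 0 ω}).toReal / Real.log r)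
    atTop (nhds (-α))

/-- The random walk in random scenery `A(t) = ∫₀ᵗ z(S_u) du`. -/
def rwrs {Ωz Ωw : Type*} (d : ℕ) (z : (Fin d → ℤ) → Ωz → ℝ)
    (S : ℝ → Ωw → (Fin d → ℤ)) (t : ℝ) (ζ : Ωz) (ω : Ωw) : ℝ :=
  ∫ u in Set.Ioc (0 : ℝ) t, z (S u ω) ζ

end
open MeasureTheory ProbabilityTheory Filter Set

noncomputable section

/-- The clock process `A²(t) = ∫₀ᵗ z(S²_u) du`, where `S²` is the second (ℤ^d-valued)
component of the walk on `ℤ^{1+d}`. -/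
def clock (d : ℕ) {Ωz Ωw : Type*} (z : (Fin d → ℤ) → Ωz → ℝ)
    (S : ℝ → Ωw → (Fin (d + 1) → ℤ)) (t : ℝ) (ζ : Ωz) (ω : Ωw) : ℝ :=
  ∫ u in Set.Ioc (0 : ℝ) t, z (fun i => S u ω i.succ) ζ

/-- The variable-speed random walk `X_t = (S¹_{A²(t)}, S²_t)` in the layered conductance
field `ω(x, x±e₁) = z(x₂)`, `ω(x, x±e_i) = 1` for `i ≥ 2` (coordinate `0` of the walk on
`ℤ^{1+d}` is the ℤ-coordinate, coordinates `1,…,d` form the ℤ^d-coordinate). -/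
def layeredWalk (d : ℕ) {Ωz Ωw : Type*} (z : (Fin d → ℤ) → Ωz → ℝ)
    (S : ℝ → Ωw → (Fin (d + 1) → ℤ)) (t : ℝ) (ζ : Ωz) (ω : Ωw) : ℤ × (Fin d → ℤ) :=
  (S (clock d z S t ζ ω) ω 0, fun i => S t ω i.succ)

/-- Euclidean norm of a point of `ℤ^{1+d} = ℤ × ℤ^d`. -/
def euclNormProd (d : ℕ) (x : ℤ × (Fin d → ℤ)) : ℝ :=
  Real.sqrt ((x.1 : ℝ) ^ 2 + ∑ i, (x.2 i : ℝ) ^ 2)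

end

open MeasureTheory ProbabilityTheory Filter Set

/-- Number of nearest-neighbour paths. -/
noncomputable def pcount (m n : ℕ) (x y : Fin m → ℤ) : ℝ := (2 * m : ℝ) ^ n * srwKernel m n x y

lemma pcount_zero (m : ℕ) (x y : Fin m → ℤ) : pcount m 0 x y = if x = y then 1 else 0 := by
  simp [pcount, srwKernel]

lemma pcount_succ (m n : ℕ) (x y : Fin m → ℤ) : pcount m (n + 1) x y =
    ∑ i : Fin m, (pcount m n (Function.update x i (x i + 1)) y
      + pcount m n (Function.update x i (x i - 1)) y) := by
  simp only [pcount, srwKernel, ← mul_add, ← Finset.mul_sum]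
  rcases Nat.eq_zero_or_pos m with h | h
  · subst h; simp
  · have : (m : ℝ) ≠ 0 := by positivity
    rw [pow_succ]; field_simp

/-- one-dimensional path counts -/
noncomputable def c1 : ℕ → ℤ → ℝ
  | 0, k => if k = 0 then 1 else 0
  | n + 1, k => c1 n (k - 1) + c1 n (k + 1)

lemma c1_nonneg (n : ℕ) : ∀ k, 0 ≤ c1 n k := by
  induction n with
  | zero => intro k; simp only [c1]; split_ifs <;> norm_num
  | succ n ih => intro k; simp only [c1]; exact add_nonneg (ih _) (ih _)

lemma c1_le (n : ℕ) : ∀ k, c1 n k ≤ 2 ^ n := by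
  induction n with
  | zero => intro k; simp only [c1]; split_ifs <;> norm_num
  | succ n ih => intro k; simp only [c1]; rw [pow_succ]; linarith [ih (k-1), ih (k+1)]

lemma pcount_factor (m n : ℕ) : ∀ (x y : Fin (m + 1) → ℤ), pcount (m + 1) n x y =
    ∑ jl ∈ Finset.HasAntidiagonal.antidiagonal n, (n.choose jl.1 : ℝ) * (c1 jl.1 (y 0 - x 0) *
      pcount m jl.2 (Fin.tail x) (Fin.tail y)) := by
  induction n with
  | zero =>
    intro x y
    have : x = y ↔ (y 0 - x 0 = 0 ∧ Fin.tail x = Fin.tail y) := by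
      constructor
      · rintro rfl; simp
      · rintro ⟨h1, h2⟩
        rw [← Fin.cons_self_tail x, ← Fin.cons_self_tail y, h2]
        congr 1; omega
    simp only [pcount_zero, this]
    by_cases h1 : y 0 - x 0 = 0 <;> by_cases h2 : Fin.tail x = Fin.tail y <;>
      simp [h1, h2, c1, pcount_zero]
  | succ n ih =>
    intro x y
    rw [pcount_succ, Fin.sum_univ_succ]
    rw [Finset.sum_antidiagonal_choose_succ_mul
      (fun j l => c1 j (y 0 - x 0) * pcount m l (Fin.tail x) (Fin.tail y))]
    rw [add_comm]
    congr 1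
    · simp only [ih, pcount_succ, Finset.mul_sum]
      rw [Finset.sum_comm]
      refine Finset.sum_congr rfl fun i _ => ?_
      rw [← Finset.sum_add_distrib]
      refine Finset.sum_congr rfl fun jl _ => ?_
      have h1 : ∀ a, Fin.tail (Function.update x i.succ a) = Function.update (Fin.tail x) i a :=
        fun a => Fin.tail_update_succ ..
      have h2 : ∀ a, Function.update x i.succ a 0 = x 0 := fun a => by
        rw [Function.update_of_ne (Fin.succ_ne_zero i).symm]
      rw [h1, h1, h2, h2]
      simp only [Fin.tail]
      ring
    · simp only [ih]
      rw [← Finset.sum_add_distrib]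
      refine Finset.sum_congr rfl fun jl hjl => ?_
      have h1 : ∀ a, Fin.tail (Function.update x 0 a) = Fin.tail x :=
        fun a => Fin.tail_update_zero ..
      rw [h1, h1]
      simp only [Function.update_self, c1]
      have : n.choose jl.2 = n.choose jl.1 := by
        rw [Finset.HasAntidiagonal.mem_antidiagonal] at hjl
        exact (Nat.choose_symm_of_eq_add (by omega)).symm
      rw [this, show y 0 - (x 0 + 1) = y 0 - x 0 - 1 by ring,
        show y 0 - (x 0 - 1) = y 0 - x 0 + 1 by ring]
      ring

/-- one-dimensional heat kernel -/
noncomputable def h1 (t : ℝ) (k : ℤ) : ℝ :=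
  ∑' n : ℕ, Real.exp (-2 * t) * (t ^ n / n.factorial * c1 n k)

lemma summable_h1 (t : ℝ) (k : ℤ) :
    Summable fun n : ℕ => ‖Real.exp (-2 * t) * (t ^ n / n.factorial * c1 n k)‖ := by
  have := (Real.summable_pow_div_factorial (|t| * 2)).mul_left (Real.exp (-2 * t))
  refine Summable.of_nonneg_of_le (fun _ => norm_nonneg _) (fun n => ?_) this
  rw [norm_mul, norm_mul, Real.norm_eq_abs, Real.norm_eq_abs, Real.norm_eq_abs, Real.abs_exp,
    abs_div, abs_pow, abs_of_nonneg (c1_nonneg n k), Nat.abs_cast, mul_pow]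
  gcongr
  rw [div_mul_eq_mul_div]
  gcongr
  exact c1_le n k

lemma h1_nonneg {t : ℝ} (ht : 0 ≤ t) (k : ℤ) : 0 ≤ h1 t k :=
  tsum_nonneg fun n => by have := c1_nonneg n k; positivity

lemma pcount_bd (m n : ℕ) : ∀ x y, 0 ≤ pcount m n x y ∧ pcount m n x y ≤ (2 * m : ℝ) ^ n := by
  induction n with
  | zero => intro x y; rw [pcount_zero]; split_ifs <;> norm_num
  | succ n ih =>
    intro x y
    rw [pcount_succ]
    refine ⟨Finset.sum_nonneg fun i _ => add_nonneg (ih _ _).1 (ih _ _).1, ?_⟩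
    refine (Finset.sum_le_sum fun i _ => add_le_add (ih _ _).2 (ih _ _).2).trans ?_
    simp only [Finset.sum_const, Finset.card_univ, Fintype.card_fin, nsmul_eq_mul]
    rw [pow_succ]; linarith

lemma heatKernel_eq (m : ℕ) (t : ℝ) (x y : Fin m → ℤ) : heatKernel m t x y =
    ∑' n : ℕ, Real.exp (-(2 * m) * t) * (t ^ n / n.factorial * pcount m n x y) := by
  unfold heatKernel pcount
  congr 1; ext n; rw [mul_pow]; ring

lemma summable_hk (m : ℕ) (t : ℝ) (x y : Fin m → ℤ) :
    Summable fun n : ℕ => ‖Real.exp (-(2 * m) * t) * (t ^ n / n.factorial * pcount m n x y)‖ := by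
  have := (Real.summable_pow_div_factorial (|t| * (2 * m))).mul_left (Real.exp (-(2 * m) * t))
  refine Summable.of_nonneg_of_le (fun _ => norm_nonneg _) (fun n => ?_) this
  rw [norm_mul, norm_mul, Real.norm_eq_abs, Real.norm_eq_abs, Real.norm_eq_abs, Real.abs_exp,
    abs_div, abs_pow, abs_of_nonneg (pcount_bd m n x y).1, Nat.abs_cast, mul_pow]
  gcongr
  rw [div_mul_eq_mul_div]
  gcongr
  exact (pcount_bd m n x y).2

lemma heatKernel_succ (m : ℕ) (t : ℝ) (x y : Fin (m + 1) → ℤ) : heatKernel (m + 1) t x y =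
    h1 t (y 0 - x 0) * heatKernel m t (Fin.tail x) (Fin.tail y) := by
  rw [heatKernel_eq, heatKernel_eq, h1, tsum_mul_tsum_eq_tsum_sum_antidiagonal_of_summable_norm
    (summable_h1 _ _) (summable_hk _ _ _ _)]
  congr 1; ext n
  rw [pcount_factor, Finset.mul_sum, Finset.mul_sum]
  refine Finset.sum_congr rfl fun jl hjl => ?_
  rw [Finset.HasAntidiagonal.mem_antidiagonal] at hjl
  have e : Real.exp (-(2 * ((m + 1 : ℕ) : ℝ)) * t) = Real.exp (-2 * t) * Real.exp (-(2 * m) * t) := by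
    rw [← Real.exp_add]; congr 1; push_cast; ring
  have f : (n.choose jl.1 : ℝ) / n.factorial = 1 / (jl.1.factorial * jl.2.factorial) := by
    subst hjl
    rw [Nat.cast_add_choose]
    have := Nat.factorial_ne_zero (jl.1 + jl.2)
    field_simp
  rw [e]
  have g : t ^ n = t ^ jl.1 * t ^ jl.2 := by rw [← pow_add, hjl]
  rw [g]
  have := congrArg (fun r => r * (Real.exp (-2 * t) * Real.exp (-(2 * m) * t) * (t ^ jl.1 * t ^ jl.2) *
    (c1 jl.1 (y 0 - x 0) * pcount m jl.2 (Fin.tail x) (Fin.tail y)))) f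
  convert this using 1
  · ring
  · field_simp

/-- product heat kernel -/
noncomputable def qk (m : ℕ) (t : ℝ) (v : Fin m → ℤ) : ℝ := ∏ i, h1 t (v i)

lemma heatKernel_qk (m : ℕ) (t : ℝ) : ∀ x y : Fin m → ℤ, heatKernel m t x y = qk m t (y - x) := by
  induction m with
  | zero =>
    intro x y
    rw [heatKernel_eq, tsum_eq_single 0]
    · simp [qk, pcount_zero, Subsingleton.elim x y]
    · intro n hn
      cases n with
      | zero => exact absurd rfl hn
      | succ n => simp [pcount_succ]
  | succ m ih =>
    intro x y
    rw [heatKernel_succ, ih, qk, qk, Fin.prod_univ_succ]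
    rfl

lemma qk_nonneg {m : ℕ} {t : ℝ} (ht : 0 ≤ t) (v : Fin m → ℤ) : 0 ≤ qk m t v :=
  Finset.prod_nonneg fun _ _ => h1_nonneg ht _

lemma hasSum_c1 (n : ℕ) : HasSum (c1 n) (2 ^ n) := by
  induction n with
  | zero =>
    have := hasSum_ite_eq (0 : ℤ) (1 : ℝ)
    simpa [c1] using this
  | succ n ih =>
    have a := (Equiv.subRight (1 : ℤ)).hasSum_iff.2 ih
    have b := (Equiv.addRight (1 : ℤ)).hasSum_iff.2 ih
    have := a.add b
    rw [pow_succ, mul_two]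
    exact this

lemma tsum_h1 {t : ℝ} (ht : 0 ≤ t) : ∑' k : ℤ, ENNReal.ofReal (h1 t k) = 1 := by
  have e : ∀ k, ENNReal.ofReal (h1 t k) =
      ∑' n : ℕ, ENNReal.ofReal (Real.exp (-2 * t) * (t ^ n / n.factorial * c1 n k)) := fun k => by
    rw [h1, ENNReal.ofReal_tsum_of_nonneg]
    · intro n; have := c1_nonneg n k; positivity
    · exact (summable_h1 t k).of_norm
  simp only [e]
  rw [ENNReal.tsum_comm]
  have f : ∀ n : ℕ, ∑' k : ℤ, ENNReal.ofReal (Real.exp (-2 * t) * (t ^ n / n.factorial * c1 n k)) =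
      ENNReal.ofReal (Real.exp (-2 * t) * ((2 * t) ^ n / n.factorial)) := fun n => by
    have := ((hasSum_c1 n).mul_left (t ^ n / n.factorial)).mul_left (Real.exp (-2 * t))
    rw [← ENNReal.ofReal_tsum_of_nonneg _ this.summable, this.tsum_eq]
    · congr 2; rw [mul_pow]; ring
    · intro k; have := c1_nonneg n k; positivity
  simp only [f]
  have hs := (Real.summable_pow_div_factorial (2 * t)).mul_left (Real.exp (-2 * t))
  rw [← ENNReal.ofReal_tsum_of_nonneg _ hs, tsum_mul_left]
  · have : ∑' n : ℕ, (2 * t) ^ n / n.factorial = Real.exp (2 * t) := by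
      rw [Real.exp_eq_exp_ℝ, NormedSpace.exp_eq_tsum_div]
    rw [this, ← Real.exp_add]; simp
  · intro n; positivity

lemma tsum_qk (m : ℕ) {t : ℝ} (ht : 0 ≤ t) :
    ∑' v : Fin m → ℤ, ENNReal.ofReal (qk m t v) = 1 := by
  induction m with
  | zero => simp [qk]
  | succ m ih =>
    rw [← (Fin.consEquiv (fun _ : Fin (m+1) => ℤ)).tsum_eq]
    have : ∀ p : ℤ × (Fin m → ℤ), ENNReal.ofReal (qk (m+1) t (Fin.consEquiv (fun _ => ℤ) p)) =
        ENNReal.ofReal (h1 t p.1) * ENNReal.ofReal (qk m t p.2) := fun p => by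
      rw [← ENNReal.ofReal_mul (h1_nonneg ht _)]
      congr 1
      simp [qk, Fin.prod_univ_succ, Fin.consEquiv]
    simp only [this]
    rw [ENNReal.tsum_prod (f := fun a b => ENNReal.ofReal (h1 t a) * ENNReal.ofReal (qk m t b))]
    simp only [ENNReal.tsum_mul_left, ih, mul_one, tsum_h1 ht]

lemma h1_zero_ge {t : ℝ} (ht : 0 ≤ t) : Real.exp (-2 * t) ≤ h1 t 0 := by
  have := (summable_h1 t 0).of_norm.le_tsum 0 (fun n _ => by have := c1_nonneg n 0; positivity)
  simpa [c1, h1] using this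

lemma qk_zero_ge (m : ℕ) {t : ℝ} (ht : 0 ≤ t) : Real.exp (-2 * m * t) ≤ qk m t 0 := by
  have : Real.exp (-2 * m * t) = ∏ _i : Fin m, Real.exp (-2 * t) := by
    rw [Finset.prod_const, ← Real.exp_nat_mul]; congr 1; simp; ring
  rw [this]
  exact Finset.prod_le_prod (fun _ _ => (Real.exp_pos _).le) (fun _ _ => h1_zero_ge ht)

open MeasureTheory ProbabilityTheory Filter Set

lemma integral_cos_int (k : ℤ) :
    ∫ θ in (-Real.pi)..Real.pi, Real.cos (k * θ) = if k = 0 then 2 * Real.pi else 0 := by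
  split_ifs with h
  · subst h; simp; ring
  · have hk : (k : ℝ) ≠ 0 := by exact_mod_cast h
    rw [intervalIntegral.integral_comp_mul_left (fun x => Real.cos x) hk]
    simp [Real.sin_int_mul_pi]

lemma c1_fourier (n : ℕ) : ∀ k : ℤ, 2 * Real.pi * c1 n k =
    ∫ θ in (-Real.pi)..Real.pi, (2 * Real.cos θ) ^ n * Real.cos (k * θ) := by
  induction n with
  | zero => intro k; simp [c1, integral_cos_int]
  | succ n ih =>
    intro k
    simp only [c1]
    rw [mul_add, ih, ih, ← intervalIntegral.integral_add]
    · refine intervalIntegral.integral_congr fun θ _ => ?_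
      push_cast
      rw [sub_mul, add_mul, Real.cos_sub, Real.cos_add, one_mul]
      ring
    · exact Continuous.intervalIntegrable (by fun_prop) _ _
    · exact Continuous.intervalIntegrable (by fun_prop) _ _

lemma h1_fourier {t : ℝ} (ht : 0 ≤ t) (k : ℤ) : 2 * Real.pi * h1 t k =
    ∫ θ in (-Real.pi)..Real.pi, Real.exp (-2 * t * (1 - Real.cos θ)) * Real.cos (k * θ) := by
  have key := intervalIntegral.hasSum_integral_of_dominated_convergence (μ := volume)
    (a := -Real.pi) (b := Real.pi)
    (F := fun (n : ℕ) (θ : ℝ) => Real.exp (-2 * t) * (t ^ n / n.factorial *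
      ((2 * Real.cos θ) ^ n * Real.cos (k * θ))))
    (f := fun θ => Real.exp (-2 * t * (1 - Real.cos θ)) * Real.cos (k * θ))
    (fun n _ => Real.exp (-2 * t) * ((2 * t) ^ n / n.factorial))
    (fun n => (Continuous.aestronglyMeasurable (by fun_prop)))
    (fun n => by
      filter_upwards with θ _
      rw [norm_mul, norm_mul, norm_mul, norm_pow, norm_mul, Real.norm_of_nonneg (Real.exp_pos _).le,
        Real.norm_of_nonneg (by positivity : 0 ≤ t ^ n / n.factorial)]
      have h1 : ‖(2:ℝ)‖ * ‖Real.cos θ‖ ≤ 2 := by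
        have := Real.abs_cos_le_one θ
        rw [Real.norm_eq_abs, Real.norm_eq_abs]; norm_num; linarith
      have h2 : ‖Real.cos (k * θ)‖ ≤ 1 := Real.abs_cos_le_one _
      calc _ ≤ Real.exp (-2 * t) * (t ^ n / n.factorial * (2 ^ n * 1)) := by gcongr
        _ = _ := by rw [mul_pow]; ring)
    (by
      filter_upwards with θ _
      exact (Real.summable_pow_div_factorial (2 * t)).mul_left _)
    (by simp)
    (by
      filter_upwards with θ _
      have : HasSum (fun n : ℕ => (2 * t * Real.cos θ) ^ n / n.factorial)
          (Real.exp (2 * t * Real.cos θ)) := by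
        rw [Real.exp_eq_exp_ℝ]; exact NormedSpace.expSeries_div_hasSum_exp _
      have := (this.mul_left (Real.exp (-2 * t))).mul_right (Real.cos (k * θ))
      rw [← Real.exp_add] at this
      convert this using 1
      · rfl
      · funext n; rw [mul_pow, mul_pow, mul_pow]; ring
      · congr 2; ring)
  rw [← key.tsum_eq, h1, ← tsum_mul_left]
  congr 1; ext n
  rw [intervalIntegral.integral_const_mul, intervalIntegral.integral_const_mul, ← c1_fourier]
  ring

lemma gauss_le {b : ℝ} (hb : 0 < b) :
    ∫ θ in (-Real.pi)..Real.pi, Real.exp (-b * θ ^ 2) ≤ √(Real.pi / b) := by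
  rw [← integral_gaussian, intervalIntegral.integral_of_le (by linarith [Real.pi_pos])]
  exact setIntegral_le_integral (integrable_exp_neg_mul_sq hb)
    (ae_of_all _ fun _ => (Real.exp_pos _).le)

lemma exp_cos_le {t θ : ℝ} (ht : 0 ≤ t) (hθ : θ ∈ Icc (-Real.pi) Real.pi) :
    Real.exp (-2 * t * (1 - Real.cos θ)) ≤ Real.exp (-(4 * t / Real.pi ^ 2) * θ ^ 2) := by
  apply Real.exp_le_exp.2
  have := Real.cos_le_one_sub_mul_cos_sq (x := θ) (abs_le.2 hθ)
  have h2 : 2 / Real.pi ^ 2 * θ ^ 2 ≤ 1 - Real.cos θ := by linarith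
  have := mul_le_mul_of_nonneg_left h2 (by linarith : 0 ≤ 2 * t)
  have e : (4 * t / Real.pi ^ 2) * θ ^ 2 = 2 * t * (2 / Real.pi ^ 2 * θ ^ 2) := by ring
  linarith

lemma h1_le : ∃ C : ℝ, 0 < C ∧ ∀ t : ℝ, 0 < t → ∀ k : ℤ, h1 t k ≤ C / √t := by
  refine ⟨(2 * Real.pi)⁻¹ * √(Real.pi * Real.pi ^ 2 / 4), by positivity, fun t ht k => ?_⟩
  have h := h1_fourier ht.le k
  have hle : ∫ θ in (-Real.pi)..Real.pi, Real.exp (-2 * t * (1 - Real.cos θ)) * Real.cos (k * θ) ≤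
      ∫ θ in (-Real.pi)..Real.pi, Real.exp (-(4 * t / Real.pi ^ 2) * θ ^ 2) := by
    refine intervalIntegral.integral_mono_on (by linarith [Real.pi_pos])
      (Continuous.intervalIntegrable (by fun_prop) _ _)
      (Continuous.intervalIntegrable (by fun_prop) _ _) fun θ hθ => ?_
    have := exp_cos_le ht.le hθ
    have h3 := Real.cos_le_one (k * θ)
    calc _ ≤ Real.exp (-2 * t * (1 - Real.cos θ)) * 1 := by gcongr
      _ ≤ _ := by rw [mul_one]; exact this
  have hg := gauss_le (b := 4 * t / Real.pi ^ 2) (by positivity)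
  have e : √(Real.pi / (4 * t / Real.pi ^ 2)) = √(Real.pi * Real.pi ^ 2 / 4) / √t := by
    rw [← Real.sqrt_div (by positivity)]; congr 1; field_simp
  rw [e] at hg
  rw [mul_div_assoc, inv_mul_eq_div, le_div_iff₀ (by positivity)]
  linarith

lemma h1_ge : ∃ c r : ℝ, 0 < c ∧ 0 < r ∧ ∀ t : ℝ, 1 ≤ t → ∀ k : ℤ, |(k : ℝ)| ≤ r * √t →
    c / √t ≤ h1 t k := by
  set D : ℝ := Real.pi ^ 2 / 4 * √(2 * Real.pi * Real.pi ^ 2 / 4) with hD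
  have hDpos : 0 < D := by positivity
  refine ⟨(2 * Real.pi)⁻¹ * Real.exp (-1), √(Real.exp (-1) / D), by positivity, by positivity,
    fun t ht k hk => ?_⟩
  have ht0 : 0 < t := by linarith
  have hst : 0 < √t := by positivity
  set b : ℝ := 4 * t / Real.pi ^ 2 with hb
  have hbpos : 0 < b := by positivity
  have hk2 : (k : ℝ) ^ 2 ≤ Real.exp (-1) / D * t := by
    rw [← sq_abs]
    calc _ ≤ (√(Real.exp (-1) / D) * √t) ^ 2 := by gcongr
      _ = _ := by rw [mul_pow, Real.sq_sqrt (by positivity), Real.sq_sqrt ht0.le]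
  have hF0 := h1_fourier ht0.le 0
  have hFk := h1_fourier ht0.le k
  -- lower bound at zero
  have hpi : (1 : ℝ) / √t ≤ Real.pi := by
    have : 1 ≤ √t := by rw [Real.one_le_sqrt]; exact ht
    calc 1 / √t ≤ 1 := by rw [div_le_one hst]; exact this
      _ ≤ Real.pi := by linarith [Real.pi_gt_three]
  have hpos : (0:ℝ) < 1 / √t := by positivity
  have low : 2 * Real.exp (-1) / √t ≤ 2 * Real.pi * h1 t 0 := by
    rw [hF0]
    have s1 : ∫ _θ in (-(1 / √t))..(1 / √t), Real.exp (-1) ≤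
        ∫ θ in (-(1 / √t))..(1 / √t), Real.exp (-2 * t * (1 - Real.cos θ)) := by
      refine intervalIntegral.integral_mono_on (by linarith) (by simp)
        (Continuous.intervalIntegrable (by fun_prop) _ _) fun θ hθ => ?_
      apply Real.exp_le_exp.2
      have a1 := Real.one_sub_sq_div_two_le_cos (x := θ)
      have a2 : θ ^ 2 ≤ 1 / t := by
        have := sq_le_sq' hθ.1 hθ.2
        rwa [div_pow, Real.sq_sqrt ht0.le, one_pow] at this
      have a3 : t * θ ^ 2 ≤ 1 := by
        calc t * θ ^ 2 ≤ t * (1 / t) := by gcongr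
          _ = 1 := by field_simp
      have a4 : t * (1 - Real.cos θ) ≤ t * (θ ^ 2 / 2) := by gcongr; linarith
      nlinarith
    have s2 : ∫ θ in (-(1 / √t))..(1 / √t), Real.exp (-2 * t * (1 - Real.cos θ)) ≤
        ∫ θ in (-Real.pi)..Real.pi, Real.exp (-2 * t * (1 - Real.cos θ)) := by
      refine intervalIntegral.integral_mono_interval (by linarith) (by linarith) hpi
        (ae_of_all _ fun _ => (Real.exp_pos _).le)
        (Continuous.intervalIntegrable (by fun_prop) _ _)
    simp only [intervalIntegral.integral_const, smul_eq_mul] at s1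
    calc 2 * Real.exp (-1) / √t = (1 / √t - -(1 / √t)) * Real.exp (-1) := by ring
      _ ≤ _ := s1
      _ ≤ _ := s2
      _ = _ := by simp
  have diff : 2 * Real.pi * h1 t 0 - 2 * Real.pi * h1 t k ≤ Real.exp (-1) / √t := by
    rw [hF0, hFk, ← intervalIntegral.integral_sub
      (Continuous.intervalIntegrable (by fun_prop) _ _)
      (Continuous.intervalIntegrable (by fun_prop) _ _)]
    have s1 : ∫ θ in (-Real.pi)..Real.pi, (Real.exp (-2 * t * (1 - Real.cos θ)) * Real.cos ((0 : ℤ) * θ)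
        - Real.exp (-2 * t * (1 - Real.cos θ)) * Real.cos (k * θ)) ≤
        ∫ θ in (-Real.pi)..Real.pi, (k : ℝ) ^ 2 / b * Real.exp (-(b / 2) * θ ^ 2) := by
      refine intervalIntegral.integral_mono_on (by linarith [Real.pi_pos])
        (Continuous.intervalIntegrable (by fun_prop) _ _)
        (Continuous.intervalIntegrable (by fun_prop) _ _) fun θ hθ => ?_
      have a1 := exp_cos_le ht0.le hθ
      have a2 := Real.one_sub_sq_div_two_le_cos (x := k * θ)
      have a3 : b / 2 * θ ^ 2 ≤ Real.exp (b / 2 * θ ^ 2) :=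
        by linarith [Real.add_one_le_exp (b / 2 * θ ^ 2)]
      calc _ = Real.exp (-2 * t * (1 - Real.cos θ)) * (1 - Real.cos (k * θ)) := by simp; ring
        _ ≤ Real.exp (-b * θ ^ 2) * ((k * θ) ^ 2 / 2) := by
            gcongr
            · linarith [Real.cos_le_one (k * θ)]
            · linarith
        _ = k ^ 2 / b * ((b / 2 * θ ^ 2) * Real.exp (-b * θ ^ 2)) := by field_simp
        _ ≤ k ^ 2 / b * (Real.exp (b / 2 * θ ^ 2) * Real.exp (-b * θ ^ 2)) := by gcongr
        _ = _ := by rw [← Real.exp_add]; congr 2; ring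
    refine s1.trans ?_
    rw [intervalIntegral.integral_const_mul]
    have hg := gauss_le (b := b / 2) (by positivity)
    have e : √(Real.pi / (b / 2)) = √(2 * Real.pi * Real.pi ^ 2 / 4) / √t := by
      rw [← Real.sqrt_div (by positivity)]; congr 1; rw [hb]; field_simp
    rw [e] at hg
    calc _ ≤ (Real.exp (-1) / D * t) / b * (√(2 * Real.pi * Real.pi ^ 2 / 4) / √t) := by
            gcongr
            exact intervalIntegral.integral_nonneg (by linarith [Real.pi_pos])
              fun _ _ => (Real.exp_pos _).le
      _ = Real.exp (-1) / √t := by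
            rw [hD, hb]; field_simp
  rw [mul_div_assoc, inv_mul_eq_div, div_le_iff₀ (by positivity)]
  have : 2 * Real.exp (-1) / √t = Real.exp (-1) / √t + Real.exp (-1) / √t := by ring
  linarith

open MeasureTheory ProbabilityTheory Filter Set
open scoped ENNReal

/-- weight of a path under a time-inhomogeneous chain -/
noncomputable def pw {α : Type*} {n : ℕ} (K0 : α → ℝ≥0∞) (K : Fin n → α → α → ℝ≥0∞)
    (y : Fin (n + 1) → α) : ℝ≥0∞ := K0 (y 0) * ∏ i, K i (y i.castSucc) (y i.succ)

lemma tsum_pw {α : Type*} (K0 : α → ℝ≥0∞) (h0 : ∑' a, K0 a = 1) (n : ℕ) :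
    ∀ (K : Fin n → α → α → ℝ≥0∞), (∀ i a, ∑' b, K i a b = 1) → ∑' y, pw K0 K y = 1 := by
  induction n with
  | zero =>
    intro K _
    rw [← h0, ← (Equiv.funUnique (Fin 1) α).tsum_eq]
    simp [pw]
  | succ n ih =>
    intro K hK
    rw [← (Fin.snocEquiv (fun _ : Fin (n+1+1) => α)).tsum_eq]
    have : ∀ p : α × (Fin (n+1) → α), pw K0 K (Fin.snocEquiv (fun _ => α) p) =
        pw K0 (fun i => K i.castSucc) p.2 * K (Fin.last n) (p.2 (Fin.last n)) p.1 := fun p => by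
      have e0 : (Fin.snocEquiv (fun _ : Fin (n+1+1) => α) p) 0 = p.2 0 :=
        Fin.snoc_castSucc (α := fun _ => α) p.1 p.2 0
      have e1 : ∀ i : Fin (n+1), (Fin.snocEquiv (fun _ : Fin (n+1+1) => α) p) i.castSucc = p.2 i :=
        fun i => Fin.snoc_castSucc (α := fun _ => α) p.1 p.2 i
      have e2 : (Fin.snocEquiv (fun _ : Fin (n+1+1) => α) p) (Fin.last _) = p.1 :=
        Fin.snoc_last (α := fun _ => α) p.1 p.2
      rw [pw, pw, Fin.prod_univ_castSucc, e0, Fin.succ_last, e2, e1]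
      simp only [Fin.succ_castSucc, e1]
      ring
    simp only [this]
    rw [ENNReal.tsum_prod (f := fun a b => pw K0 (fun i => K i.castSucc) b *
      K (Fin.last n) (b (Fin.last n)) a), ENNReal.tsum_comm]
    simp only [ENNReal.tsum_mul_left, hK, mul_one]
    exact ih _ fun i a => hK _ a

lemma indep_of_factor {Ω α β : Type*} [MeasurableSpace Ω] (ν : Measure Ω) [IsProbabilityMeasure ν]
    [MeasurableSpace α] [MeasurableSpace β] [MeasurableSingletonClass α]
    [MeasurableSingletonClass β] [Countable α] [Countable β] {X : Ω → α} {Y : Ω → β}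
    (hX : Measurable X) (hY : Measurable Y) (f : α → ℝ≥0∞) (g : β → ℝ≥0∞)
    (hf : ∑' a, f a = 1) (hg : ∑' b, g b = 1)
    (h : ∀ a b, ν {ω | X ω = a ∧ Y ω = b} = f a * g b) :
    IndepFun X Y ν ∧ (∀ a, ν {ω | X ω = a} = f a) ∧ (∀ b, ν {ω | Y ω = b} = g b) := by
  have hXa : ∀ a, MeasurableSet {ω | X ω = a} := fun a => hX (measurableSet_singleton a)
  have hYb : ∀ b, MeasurableSet {ω | Y ω = b} := fun b => hY (measurableSet_singleton b)
  have A : ∀ a, ν {ω | X ω = a} = f a := fun a => by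
    have e : {ω | X ω = a} = ⋃ b, {ω | X ω = a ∧ Y ω = b} := by ext ω; simp
    rw [e, measure_iUnion]
    · simp only [h, ENNReal.tsum_mul_left, hg, mul_one]
    · intro b b' hbb
      refine Set.disjoint_left.2 fun ω h1 h2 => hbb (h1.2.symm.trans h2.2)
    · intro b; exact (hXa a).inter (hYb b)
  have B : ∀ b, ν {ω | Y ω = b} = g b := fun b => by
    have e : {ω | Y ω = b} = ⋃ a, {ω | X ω = a ∧ Y ω = b} := by ext ω; simp
    rw [e, measure_iUnion]
    · simp only [h, ENNReal.tsum_mul_right, hf, one_mul]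
    · intro b b' hbb
      refine Set.disjoint_left.2 fun ω h1 h2 => hbb (h1.1.symm.trans h2.1)
    · intro a; exact (hXa a).inter (hYb b)
  refine ⟨?_, A, B⟩
  rw [indepFun_iff_map_prod_eq_prod_map_map hX.aemeasurable hY.aemeasurable]
  refine Measure.ext_of_singleton fun ⟨a, b⟩ => ?_
  rw [← Set.singleton_prod_singleton, Measure.prod_prod, Set.singleton_prod_singleton,
    Measure.map_apply (hX.prodMk hY) (measurableSet_singleton _),
    Measure.map_apply hX (measurableSet_singleton _),
    Measure.map_apply hY (measurableSet_singleton _)]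
  have e1 : (fun ω => (X ω, Y ω)) ⁻¹' {(a, b)} = {ω | X ω = a ∧ Y ω = b} := by ext; simp
  rw [e1, h]
  exact (congrArg₂ (· * ·) (A a) (B b)).symm

/-- second component of the walk -/
def T2 {d : ℕ} {Ωw : Type*} (S : ℝ → Ωw → (Fin (d + 1) → ℤ)) (u : ℝ) (ω : Ωw) : Fin d → ℤ :=
  fun i => S u ω i.succ

section
variable {d : ℕ} {Ωw : Type*} [MeasurableSpace Ωw]
    {P : (Fin (d + 1) → ℤ) → Measure Ωw} {S : ℝ → Ωw → (Fin (d + 1) → ℤ)}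

lemma meas_S (hS : IsCTSRW (d + 1) P S) (u : ℝ) : Measurable (S u) :=
  hS.meas.comp (measurable_const.prodMk measurable_id)

lemma meas_S1 (hS : IsCTSRW (d + 1) P S) (u : ℝ) : Measurable (fun ω => S u ω 0) :=
  (measurable_pi_apply 0).comp (meas_S hS u)

lemma meas_T2 (hS : IsCTSRW (d + 1) P S) (u : ℝ) : Measurable (T2 S u) :=
  measurable_pi_lambda _ fun i => (measurable_pi_apply i.succ).comp (meas_S hS u)

lemma meas_T2_joint (hS : IsCTSRW (d + 1) P S) : Measurable (fun p : ℝ × Ωw => T2 S p.1 p.2) :=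
  measurable_pi_lambda _ fun i => (measurable_pi_apply i.succ).comp hS.meas

lemma tsum_h1_shift {t : ℝ} (ht : 0 ≤ t) (a : ℤ) :
    ∑' b : ℤ, ENNReal.ofReal (h1 t (b - a)) = 1 := by
  rw [← tsum_h1 ht]
  exact (Equiv.subRight a).tsum_eq (fun b => ENNReal.ofReal (h1 t b))

lemma tsum_qk_shift {t : ℝ} (ht : 0 ≤ t) (a : Fin d → ℤ) :
    ∑' b : Fin d → ℤ, ENNReal.ofReal (qk d t (b - a)) = 1 := by
  rw [← tsum_qk d ht]
  exact (Equiv.subRight a).tsum_eq (fun b => ENNReal.ofReal (qk d t b))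

lemma tsum_qk_shift' {t : ℝ} (ht : 0 ≤ t) (a : Fin d → ℤ) :
    ∑' b : Fin d → ℤ, ENNReal.ofReal (qk d t (a - b)) = 1 := by
  rw [← tsum_qk d ht]
  exact (Equiv.subLeft a).tsum_eq (fun b => ENNReal.ofReal (qk d t b))

/-- path weights of the first and second component -/
noncomputable def wf {n : ℕ} (t : Fin (n + 1) → ℝ) : (Fin (n + 1) → ℤ) → ℝ≥0∞ :=
  pw (fun a => ENNReal.ofReal (h1 (t 0) a))
    (fun i a b => ENNReal.ofReal (h1 (t i.succ - t i.castSucc) (b - a)))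

noncomputable def wg (d : ℕ) {n : ℕ} (t : Fin (n + 1) → ℝ) : (Fin (n + 1) → Fin d → ℤ) → ℝ≥0∞ :=
  pw (fun a => ENNReal.ofReal (qk d (t 0) a))
    (fun i a b => ENNReal.ofReal (qk d (t i.succ - t i.castSucc) (b - a)))

lemma fdd_main (hS : IsCTSRW (d + 1) P S) {n : ℕ} (t : Fin (n + 1) → ℝ) (h0 : 0 ≤ t 0)
    (hm : ∀ i : Fin n, t i.castSucc ≤ t i.succ) :
    IndepFun (fun ω i => S (t i) ω 0) (fun ω i => T2 S (t i) ω) (P 0) ∧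
    (∀ a, P 0 {ω | (fun i => S (t i) ω 0) = a} = wf t a) ∧
    (∀ b, P 0 {ω | (fun i => T2 S (t i) ω) = b} = wg d t b) := by
  have := hS.prob 0
  refine indep_of_factor (P 0) (measurable_pi_lambda _ fun i => meas_S1 hS _)
    (measurable_pi_lambda _ fun i => meas_T2 hS _) (wf t) (wg d t)
    (tsum_pw _ (tsum_h1 h0) _ _ fun i a => tsum_h1_shift (sub_nonneg.2 (hm i)) a)
    (tsum_pw _ (tsum_qk d h0) _ _ fun i a => tsum_qk_shift (sub_nonneg.2 (hm i)) a) ?_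
  intro a b
  have key := hS.fdd 0 n t h0 hm (fun i => Fin.cons (a i) (b i))
  have e : {ω | (fun i => S (t i) ω 0) = a ∧ (fun i => T2 S (t i) ω) = b} =
      {ω | ∀ i, S (t i) ω = Fin.cons (a i) (b i)} := by
    ext ω
    simp only [mem_ofPred_eq, funext_iff]
    constructor
    · rintro ⟨h1, h2⟩ i j
      refine Fin.cases ?_ (fun j => ?_) j
      · simpa using h1 i
      · simpa [T2] using h2 i j
    · intro h
      exact ⟨fun i => by simpa using h i 0, fun i j => by simpa [T2] using h i j.succ⟩
  rw [e, ← ENNReal.ofReal_toReal (measure_ne_top (P 0) _), key, wf, wg, pw, pw]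
  have hk : ∀ s x y, heatKernel (d+1) s x y = h1 s (y 0 - x 0) * qk d s (Fin.tail y - Fin.tail x) :=
    fun s x y => by rw [heatKernel_succ, heatKernel_qk]
  simp only [hk]
  rw [ENNReal.ofReal_mul (mul_nonneg (h1_nonneg h0 _) (qk_nonneg h0 _)),
    ENNReal.ofReal_mul (h1_nonneg h0 _), ENNReal.ofReal_prod_of_nonneg
      (fun i _ => mul_nonneg (h1_nonneg (sub_nonneg.2 (hm i)) _) (qk_nonneg (sub_nonneg.2 (hm i)) _))]
  have : ∀ i : Fin n, ENNReal.ofReal (h1 (t i.succ - t i.castSucc)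
        ((Fin.cons (a i.succ) (b i.succ) : Fin (d+1) → ℤ) 0
          - (Fin.cons (a i.castSucc) (b i.castSucc) : Fin (d+1) → ℤ) 0) *
      qk d (t i.succ - t i.castSucc) (Fin.tail (Fin.cons (a i.succ) (b i.succ) : Fin (d+1) → ℤ)
          - Fin.tail (Fin.cons (a i.castSucc) (b i.castSucc) : Fin (d+1) → ℤ))) =
      ENNReal.ofReal (h1 (t i.succ - t i.castSucc) (a i.succ - a i.castSucc)) *
        ENNReal.ofReal (qk d (t i.succ - t i.castSucc) (b i.succ - b i.castSucc)) := fun i => by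
    rw [ENNReal.ofReal_mul (h1_nonneg (sub_nonneg.2 (hm i)) _)]
    simp
  simp only [this, Finset.prod_mul_distrib]
  have z : Fin.tail (0 : Fin (d+1) → ℤ) = 0 := rfl
  simp only [Fin.cons_zero, Pi.zero_apply, sub_zero, Fin.tail_cons, z]
  ring

lemma prob_S1 (hS : IsCTSRW (d + 1) P S) {s : ℝ} (hs : 0 ≤ s) (k : ℤ) :
    P 0 {ω | S s ω 0 = k} = ENNReal.ofReal (h1 s k) := by
  have := (fdd_main hS (n := 0) (fun _ => s) hs (fun i => i.elim0)).2.1 (fun _ => k)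
  simpa [wf, pw, funext_iff] using this

lemma prob_T2 (hS : IsCTSRW (d + 1) P S) {s : ℝ} (hs : 0 ≤ s) (v : Fin d → ℤ) :
    P 0 {ω | T2 S s ω = v} = ENNReal.ofReal (qk d s v) := by
  have := (fdd_main hS (n := 0) (fun _ => s) hs (fun i => i.elim0)).2.2 (fun _ => v)
  rw [wg, pw] at this
  simp only [Finset.univ_eq_empty, Finset.prod_empty, mul_one] at this
  rw [← this]
  congr 1; ext ω; simp [funext_iff]

lemma indep_proc (hS : IsCTSRW (d + 1) P S) {s : ℝ} (hs : 0 ≤ s) :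
    IndepFun (fun ω => S s ω 0) (fun ω (u : NNReal) => T2 S u ω) (P 0) := by
  have := hS.prob 0
  refine IndepFun.indepFun_process (meas_S1 hS s) (fun u => meas_T2 hS u) fun I => ?_
  classical
  let J : Finset NNReal := insert ⟨s, hs⟩ I
  have hJ : J.card = (J.card - 1) + 1 := by
    have : 0 < J.card := Finset.card_pos.2 ⟨_, Finset.mem_insert_self _ _⟩
    omega
  let e := J.orderIsoOfFin hJ
  have hmono : ∀ i j, i ≤ j → (e i : NNReal) ≤ e j := fun i j hij => by
    exact_mod_cast e.monotone hij
  obtain ⟨hi, -, -⟩ := fdd_main hS (fun i => ((e i : NNReal) : ℝ)) (e 0 : NNReal).2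
    (fun i => by exact_mod_cast hmono _ _ (Fin.castSucc_lt_succ).le)
  have m1 : Measurable (fun v : Fin (J.card - 1 + 1) → ℤ =>
      v (e.symm ⟨⟨s, hs⟩, Finset.mem_insert_self _ _⟩)) := measurable_pi_apply _
  have m2 : Measurable (fun (v : Fin (J.card - 1 + 1) → Fin d → ℤ) (i : I) =>
      v (e.symm ⟨i, Finset.mem_insert_of_mem i.2⟩)) :=
    measurable_pi_lambda _ fun i => measurable_pi_apply _
  have a := hi.comp m1 m2
  convert a using 1
  · ext ω; simp; rfl
  · ext ω i; simp

end

open MeasureTheory ProbabilityTheory Filter Set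
open scoped ENNReal

/-- approximating grid time from the right -/
noncomputable def gridT (n : ℕ) (u : ℝ) : ℝ := (⌈((n : ℝ) + 1) * u⌉₊ : ℝ) / ((n : ℝ) + 1)

lemma le_gridT (n : ℕ) (u : ℝ) : u ≤ gridT n u := by
  rw [gridT, le_div_iff₀ (by positivity), mul_comm]
  exact Nat.le_ceil _

lemma gridT_lt (n : ℕ) {u : ℝ} (hu : 0 ≤ u) : gridT n u < u + 1 / ((n : ℝ) + 1) := by
  rw [gridT, div_lt_iff₀ (by positivity)]
  have := Nat.ceil_lt_add_one (a := ((n : ℝ) + 1) * u) (by positivity)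
  have h : (n : ℝ) + 1 ≠ 0 := by positivity
  have e : (u + 1 / ((n : ℝ) + 1)) * ((n : ℝ) + 1) = ((n : ℝ) + 1) * u + 1 := by field_simp
  rw [e]; exact this

lemma gridT_eventually {u ε : ℝ} (hu : 0 ≤ u) (hε : 0 < ε) : ∀ᶠ n in atTop, gridT n u < u + ε := by
  filter_upwards [(tendsto_one_div_add_atTop_nhds_zero_nat (𝕜 := ℝ)).eventually (gt_mem_nhds hε)]
    with n hn
  linarith [gridT_lt n hu]

section
variable {d : ℕ}

/-- clock functional on path space -/
noncomputable def Fpath (t : ℝ) (w : (Fin d → ℤ) → ℝ) (p : NNReal → (Fin d → ℤ)) : ℝ≥0∞ :=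
  ⨆ M : ℕ, liminf (fun n : ℕ => ∫⁻ u in Ioc (0:ℝ) t,
    min (ENNReal.ofReal (w (p (Real.toNNReal (gridT n u))))) M) atTop

lemma measurable_Fpath (t : ℝ) (w : (Fin d → ℤ) → ℝ) : Measurable (Fpath t w) := by
  refine Measurable.iSup fun M => Measurable.liminf fun n => ?_
  refine Measurable.lintegral_prod_right' (f := fun q : (NNReal → (Fin d → ℤ)) × ℝ =>
    min (ENNReal.ofReal (w (q.1 (Real.toNNReal (gridT n q.2))))) (M : ℝ≥0∞)) ?_
  have h1 : Measurable (fun r : (NNReal → (Fin d → ℤ)) × ℕ =>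
      r.1 (Real.toNNReal ((r.2 : ℝ) / ((n : ℝ) + 1)))) :=
    measurable_from_prod_countable_left fun k =>
      measurable_pi_apply (Real.toNNReal ((k : ℝ) / ((n : ℝ) + 1)))
  have h2 : Measurable (fun q : (NNReal → (Fin d → ℤ)) × ℝ => (q.1, ⌈((n : ℝ) + 1) * q.2⌉₊)) :=
    measurable_fst.prodMk (Nat.measurable_ceil.comp (measurable_snd.const_mul _))
  have h3 := h1.comp h2
  have hw : Measurable w := measurable_of_countable _
  exact ((hw.comp h3).ennreal_ofReal).min measurable_const

variable {Ωw : Type*} [MeasurableSpace Ωw]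
    {P : (Fin (d + 1) → ℤ) → Measure Ωw} {S : ℝ → Ωw → (Fin (d + 1) → ℤ)}

/-- right-continuity of a path -/
def RC (S : ℝ → Ωw → (Fin (d + 1) → ℤ)) (ω : Ωw) : Prop := ∀ t : ℝ, 0 ≤ t →
    ∃ ε > (0 : ℝ), ∀ u, t ≤ u → u < t + ε → S u ω = S t ω

lemma T2_congr {ω : Ωw} {u v : ℝ} (h : S u ω = S v ω) : T2 S u ω = T2 S v ω := by
  unfold T2; rw [h]

lemma Fpath_eq (hS : IsCTSRW (d + 1) P S) (t : ℝ) (w : (Fin d → ℤ) → ℝ) {ω : Ωw} (hω : RC S ω) :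
    Fpath t w (fun u : NNReal => T2 S u ω) = ∫⁻ u in Ioc (0:ℝ) t, ENNReal.ofReal (w (T2 S u ω)) := by
  have hw : Measurable w := measurable_of_countable _
  have mT : Measurable (fun u => T2 S u ω) :=
    (meas_T2_joint hS).comp (measurable_id.prodMk measurable_const)
  have mg : ∀ n, Measurable (gridT n) := fun n => by
    unfold gridT
    exact (((measurable_from_top (f := fun n : ℕ => (n : ℝ))).comp (Nat.measurable_ceil.comp (measurable_id.const_mul _)))).div_const _
  have step : ∀ M : ℕ, liminf (fun n : ℕ => ∫⁻ u in Ioc (0:ℝ) t,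
      min (ENNReal.ofReal (w (T2 S (Real.toNNReal (gridT n u)) ω))) M) atTop =
      ∫⁻ u in Ioc (0:ℝ) t, min (ENNReal.ofReal (w (T2 S u ω))) M := fun M => by
    refine Tendsto.liminf_eq ?_
    refine tendsto_lintegral_of_dominated_convergence (fun _ => (M : ℝ≥0∞)) (fun n => ?_) (fun n => ?_)
      ?_ ?_
    · exact ((hw.comp (mT.comp (measurable_coe_nnreal_real.comp
        (measurable_real_toNNReal.comp (mg n))))).ennreal_ofReal).min measurable_const
    · exact ae_of_all _ fun u => min_le_right _ _
    · simp [ENNReal.mul_eq_top]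
    · refine (ae_restrict_iff' measurableSet_Ioc).2 (ae_of_all _ fun u hu => ?_)
      obtain ⟨ε, hε, h⟩ := hω u hu.1.le
      refine tendsto_const_nhds.congr' ?_
      filter_upwards [gridT_eventually hu.1.le hε] with n hn
      have h1 : ((Real.toNNReal (gridT n u) : NNReal) : ℝ) = gridT n u :=
        Real.coe_toNNReal _ (hu.1.le.trans (le_gridT n u))
      have := h _ (le_gridT n u) hn
      simp only [h1, T2_congr this]
  unfold Fpath
  simp only [step]
  rw [← lintegral_iSup]
  · refine lintegral_congr fun u => ?_
    apply le_antisymm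
    · exact iSup_le fun M => min_le_left _ _
    · obtain ⟨M, hM⟩ := exists_nat_ge (w (T2 S u ω))
      refine le_iSup_of_le M (le_min le_rfl ?_)
      exact ENNReal.ofReal_le_of_le_toReal (by simpa using hM)
  · intro M
    exact ((hw.comp mT).ennreal_ofReal).min measurable_const
  · intro M M' h u
    exact min_le_min_left _ (by exact_mod_cast h)

/-- the event of staying at `x` during `[t-δ,t]` -/
def Bset (t δ : ℝ) (x : Fin d → ℤ) : Set (NNReal → (Fin d → ℤ)) :=
  {p | ∀ n : ℕ, ∀ j : Fin (2 ^ n + 1), p (Real.toNNReal (t - δ + j * δ / 2 ^ n)) = x}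

lemma measurableSet_Bset (t δ : ℝ) (x : Fin d → ℤ) : MeasurableSet (Bset t δ x) := by
  have : Bset t δ x = ⋂ n : ℕ, ⋂ j : Fin (2 ^ n + 1),
      {p | p (Real.toNNReal (t - δ + j * δ / 2 ^ n)) = x} := by
    ext p; simp [Bset]
  rw [this]
  exact MeasurableSet.iInter fun n => MeasurableSet.iInter fun j =>
    (measurable_pi_apply (X := fun _ : NNReal => Fin d → ℤ)
      (Real.toNNReal (t - δ + j * δ / 2 ^ n))) (measurableSet_singleton x)

lemma Fpath_ge_of_Bset (hS : IsCTSRW (d + 1) P S) {t δ : ℝ} (hδ : 0 < δ) (hδt : δ ≤ t)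
    (w : (Fin d → ℤ) → ℝ) {ω : Ωw} (hω : RC S ω) {x : Fin d → ℤ} (hw : 0 ≤ w x)
    (hB : (fun u : NNReal => T2 S u ω) ∈ Bset t δ x) :
    ENNReal.ofReal (w x * δ) ≤ Fpath t w (fun u : NNReal => T2 S u ω) := by
  have hT : ∀ u ∈ Ioo (t - δ) t, T2 S u ω = x := fun u hu => by
    have hu0 : 0 ≤ u := by linarith [hu.1]
    obtain ⟨ε, hε, h⟩ := hω u hu0
    obtain ⟨n, hn⟩ := pow_unbounded_of_one_lt (δ / ε) (one_lt_two)
    have h2 : (0:ℝ) < 2 ^ n := by positivity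
    set j := ⌈(u - (t - δ)) * 2 ^ n / δ⌉₊ with hj
    have hj1 : j ≤ 2 ^ n := by
      rw [hj, Nat.ceil_le]
      push_cast
      rw [div_le_iff₀ hδ, mul_comm]
      gcongr; linarith [hu.2]
    have hpos : 0 ≤ (u - (t - δ)) * 2 ^ n / δ := by
      have : 0 ≤ u - (t - δ) := by linarith [hu.1]
      positivity
    have a1 : (u - (t - δ)) * 2 ^ n / δ ≤ j := Nat.le_ceil _
    have a2 : (j : ℝ) < (u - (t - δ)) * 2 ^ n / δ + 1 := Nat.ceil_lt_add_one hpos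
    have b1 : u ≤ t - δ + j * δ / 2 ^ n := by
      rw [div_le_iff₀ hδ] at a1
      have : u - (t - δ) ≤ j * δ / 2 ^ n := by rw [le_div_iff₀ h2]; exact a1
      linarith
    have b2 : t - δ + j * δ / 2 ^ n < u + ε := by
      have c1 : (j : ℝ) * δ / 2 ^ n < ((u - (t - δ)) * 2 ^ n / δ + 1) * δ / 2 ^ n := by gcongr
      have c2 : ((u - (t - δ)) * 2 ^ n / δ + 1) * δ / 2 ^ n = (u - (t - δ)) + δ / 2 ^ n := by
        field_simp
      have c3 : δ / 2 ^ n < ε := by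
        rw [div_lt_iff₀ hε] at hn
        rw [div_lt_iff₀ h2]; linarith
      linarith
    have h3 : T2 S (Real.toNNReal (t - δ + j * δ / 2 ^ n)) ω = x :=
      hB n ⟨j, Nat.lt_succ_of_le hj1⟩
    rw [Real.coe_toNNReal _ (hu0.trans b1)] at h3
    rw [← h3]
    exact (T2_congr (h _ b1 b2)).symm
  rw [Fpath_eq hS t w hω]
  calc ENNReal.ofReal (w x * δ) = ∫⁻ u in Ioo (t - δ) t, ENNReal.ofReal (w x) := by
        rw [setLIntegral_const, Real.volume_Ioo, ENNReal.ofReal_mul hw]; congr 2; ring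
    _ = ∫⁻ u in Ioo (t - δ) t, ENNReal.ofReal (w (T2 S u ω)) :=
        setLIntegral_congr_fun measurableSet_Ioo fun u hu => by simp only [hT u hu]
    _ ≤ _ := lintegral_mono_set
        (fun u hu => ⟨by linarith [hu.1], hu.2.le⟩ : Ioo (t - δ) t ⊆ Ioc 0 t)

lemma prob_grid (hS : IsCTSRW (d + 1) P S) {t δ : ℝ} (hδ : 0 < δ) (hδt : δ ≤ t)
    (x : Fin d → ℤ) (N : ℕ) (hN : 0 < N) :
    ENNReal.ofReal (qk d (t - δ) x * Real.exp (-2 * d * δ)) ≤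
      P 0 {ω | ∀ j : Fin (N + 1), T2 S (t - δ + j * δ / N) ω = x} := by
  have hN' : (0 : ℝ) < N := by exact_mod_cast hN
  have h0 : 0 ≤ t - δ := by linarith
  have h := (fdd_main hS (n := N) (fun j => t - δ + (j : ℕ) * δ / N) (by simpa using h0)
    (fun i => by simp only [Fin.val_castSucc, Fin.val_succ]; push_cast; gcongr; linarith)).2.2 (fun _ => x)
  simp only [funext_iff] at h
  have e : {ω | ∀ j : Fin (N + 1), T2 S (t - δ + j * δ / N) ω = x} =
      {ω | ∀ (j : Fin (N + 1)) (i : Fin d), T2 S (t - δ + j * δ / N) ω i = x i} := by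
    ext ω; simp [funext_iff]
  rw [e, h, wg, pw]
  have e2 : ∀ i : Fin N, (t - δ + ((i.succ : Fin (N+1)) : ℕ) * δ / N) -
      (t - δ + ((i.castSucc : Fin (N+1)) : ℕ) * δ / N) = δ / N := fun i => by
    simp only [Fin.val_castSucc, Fin.val_succ]; push_cast; ring
  simp only [e2, sub_self, Finset.prod_const, Finset.card_univ, Fintype.card_fin]
  rw [← ENNReal.ofReal_pow (qk_nonneg (by positivity) _), ← ENNReal.ofReal_mul (qk_nonneg (by simpa using h0) _)]
  apply ENNReal.ofReal_le_ofReal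
  have e3 : Real.exp (-2 * d * δ) = Real.exp (-2 * d * (δ / N)) ^ N := by
    rw [← Real.exp_nat_mul]; congr 1; field_simp
  rw [e3]
  have := qk_zero_ge d (t := δ / N) (by positivity)
  have e4 : t - δ + ((0 : Fin (N+1)) : ℕ) * δ / N = t - δ := by simp
  rw [e4]
  gcongr
  exact qk_nonneg h0 x

lemma prob_Bset (hS : IsCTSRW (d + 1) P S) {t δ : ℝ} (hδ : 0 < δ) (hδt : δ ≤ t) (x : Fin d → ℤ) :
    ENNReal.ofReal (qk d (t - δ) x * Real.exp (-2 * d * δ)) ≤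
      P 0 {ω | (fun u : NNReal => T2 S u ω) ∈ Bset t δ x} := by
  have := hS.prob 0
  have h0 : 0 ≤ t - δ := by linarith
  have e : {ω | (fun u : NNReal => T2 S u ω) ∈ Bset t δ x} =
      ⋂ n : ℕ, {ω | ∀ j : Fin (2 ^ n + 1), T2 S (t - δ + j * δ / (2 ^ n : ℕ)) ω = x} := by
    ext ω
    simp only [Bset, mem_ofPred_eq, mem_iInter]
    refine forall_congr' fun n => forall_congr' fun j => ?_
    rw [Real.coe_toNNReal _ (by positivity)]
    push_cast; rfl
  rw [e]
  refine ge_of_tendsto (tendsto_measure_iInter_atTop (fun n => ?_) ?_ ⟨0, measure_ne_top _ _⟩)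
    (Eventually.of_forall fun n => prob_grid hS hδ hδt x (2 ^ n) (by positivity))
  · have : {ω | ∀ j : Fin (2 ^ n + 1), T2 S (t - δ + j * δ / (2 ^ n : ℕ)) ω = x} =
      ⋂ j : Fin (2 ^ n + 1), {ω | T2 S (t - δ + j * δ / (2 ^ n : ℕ)) ω = x} := by ext; simp
    rw [this]
    exact (MeasurableSet.iInter fun j => meas_T2 hS _ (measurableSet_singleton x)).nullMeasurableSet
  · refine antitone_nat_of_succ_le fun n ω hω => ?_
    simp only [mem_ofPred_eq] at hω ⊢
    intro j
    have := hω ⟨2 * j, by have := j.2; rw [pow_succ]; omega⟩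
    rw [← this]
    congr 1
    push_cast
    rw [pow_succ]; field_simp

lemma prob_two (hS : IsCTSRW (d + 1) P S) {s δ : ℝ} (hδ : 0 ≤ δ) (hs : 0 ≤ s) (x y : Fin d → ℤ) :
    P 0 {ω | T2 S s ω = y ∧ T2 S (s + δ) ω = x} =
      ENNReal.ofReal (qk d s y) * ENNReal.ofReal (qk d δ (x - y)) := by
  have h := (fdd_main hS (n := 1) ![s, s + δ] (by simpa using hs)
    (fun i => by fin_cases i; simpa using hδ)).2.2 ![y, x]
  rw [wg, pw] at h
  simp at h
  rw [← h]
  congr 1; ext ω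
  simp only [mem_ofPred_eq]
  constructor
  · rintro ⟨h1, h2⟩
    ext i j; fin_cases i
    · simp [h1]
    · simp [h2]
  · intro h
    exact ⟨by simpa using congrFun h 0, by simpa using congrFun h 1⟩

lemma holding (hS : IsCTSRW (d + 1) P S) {t δ : ℝ} (hδ : 0 < δ) (hδt : δ ≤ t) (x : Fin d → ℤ)
    {M : ℝ} (hM : ∀ v, qk d (t - δ) v ≤ M) :
    P 0 {ω | T2 S t ω = x ∧ (fun u : NNReal => T2 S u ω) ∉ Bset t δ x} ≤
      ENNReal.ofReal (M * (2 * d * δ)) := by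
  have := hS.prob 0
  have h0 : 0 ≤ t - δ := by linarith
  set B := {ω | (fun u : NNReal => T2 S u ω) ∈ Bset t δ x} with hBdef
  have hM0 : 0 ≤ M := (qk_nonneg h0 x).trans (hM x)
  have mB : MeasurableSet B :=
    (measurable_pi_lambda _ fun u : NNReal => meas_T2 hS u) (measurableSet_Bset t δ x)
  set E := {ω | T2 S (t - δ) ω = x ∧ T2 S t ω = x} with hE
  have hBE : B ⊆ E := fun ω hω => by
    have a := hω 0 0
    have b := hω 0 1
    simp at a b
    rw [max_eq_left h0] at a
    rw [max_eq_left (by linarith)] at b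
    exact ⟨a, b⟩
  have hq1 : qk d δ 0 ≤ 1 := by
    have h := ENNReal.le_tsum (f := fun v : Fin d → ℤ => ENNReal.ofReal (qk d δ v)) 0
    rw [tsum_qk d hδ.le] at h
    simpa using h
  have hb : P 0 E = ENNReal.ofReal (qk d (t - δ) x * qk d δ 0) := by
    have := prob_two hS hδ.le h0 x x
    rw [sub_add_cancel, sub_self] at this
    rw [hE, this, ENNReal.ofReal_mul (qk_nonneg h0 _)]
  have ha : P 0 {ω | T2 S (t - δ) ω ≠ x ∧ T2 S t ω = x} ≤ ENNReal.ofReal (M * (1 - qk d δ 0)) := by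
    have hsub : {ω | T2 S (t - δ) ω ≠ x ∧ T2 S t ω = x} ⊆
        ⋃ y : Fin d → ℤ, {ω | (y ≠ x ∧ T2 S (t - δ) ω = y) ∧ T2 S t ω = x} := fun ω hω => by
      simp only [mem_iUnion]
      exact ⟨T2 S (t - δ) ω, ⟨hω.1, rfl⟩, hω.2⟩
    refine (measure_mono hsub).trans ((measure_iUnion_le _).trans ?_)
    have hle : ∀ y : Fin d → ℤ, P 0 {ω | (y ≠ x ∧ T2 S (t - δ) ω = y) ∧ T2 S t ω = x} ≤
        ENNReal.ofReal M * (if y = x then 0 else ENNReal.ofReal (qk d δ (x - y))) := fun y => by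
      split_ifs with hy
      · simp [hy]
      · have := prob_two hS hδ.le h0 x y
        rw [sub_add_cancel] at this
        simp only [ne_eq, hy, not_false_eq_true, true_and]
        rw [this]
        gcongr
        exact hM y
    refine (ENNReal.tsum_le_tsum hle).trans ?_
    rw [ENNReal.tsum_mul_left, ENNReal.ofReal_mul hM0]
    gcongr
    have hs := tsum_qk_shift' (d := d) hδ.le x
    rw [ENNReal.tsum_eq_add_tsum_ite x, sub_self] at hs
    rw [ENNReal.ofReal_sub _ (qk_nonneg hδ.le _), ENNReal.ofReal_one, ← hs,
      ENNReal.add_sub_cancel_left ENNReal.ofReal_ne_top]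
    exact le_of_eq (tsum_congr fun y => by split_ifs <;> rfl)
  have hc := prob_Bset hS hδ hδt x
  have hd : P 0 (E \ B) ≤ ENNReal.ofReal (M * (qk d δ 0 - Real.exp (-2 * d * δ))) := by
    rw [measure_sdiff hBE mB.nullMeasurableSet (measure_ne_top _ _), hb]
    calc _ ≤ ENNReal.ofReal (qk d (t - δ) x * qk d δ 0) -
          ENNReal.ofReal (qk d (t - δ) x * Real.exp (-2 * d * δ)) := tsub_le_tsub_left hc _
      _ = ENNReal.ofReal (qk d (t - δ) x * (qk d δ 0 - Real.exp (-2 * d * δ))) := by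
          rw [← ENNReal.ofReal_sub, mul_sub]
          exact mul_nonneg (qk_nonneg h0 _) (Real.exp_pos _).le
      _ ≤ _ := by
          apply ENNReal.ofReal_le_ofReal
          apply mul_le_mul_of_nonneg_right (hM x)
          have := qk_zero_ge d hδ.le
          linarith
  have hsub : {ω | T2 S t ω = x ∧ (fun u : NNReal => T2 S u ω) ∉ Bset t δ x} ⊆
      {ω | T2 S (t - δ) ω ≠ x ∧ T2 S t ω = x} ∪ (E \ B) := fun ω hω => by
    by_cases h : T2 S (t - δ) ω = x
    · exact Or.inr ⟨⟨h, hω.1⟩, hω.2⟩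
    · exact Or.inl ⟨h, hω.1⟩
  refine (measure_mono hsub).trans ((measure_union_le _ _).trans ((add_le_add ha hd).trans ?_))
  have hz := qk_zero_ge d hδ.le
  rw [← ENNReal.ofReal_add (mul_nonneg hM0 (by linarith)) (mul_nonneg hM0 (by linarith))]
  apply ENNReal.ofReal_le_ofReal
  rw [← mul_add]
  gcongr
  have := Real.add_one_le_exp (-2 * d * δ)
  linarith

/-- Spreading bound for `S¹` evaluated at an independent random time. -/
lemma spread (hS : IsCTSRW (d + 1) P S) {C : ℝ} (hC0 : 0 < C)
    (hC : ∀ t : ℝ, 0 < t → ∀ k : ℤ, h1 t k ≤ C / √t)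
    (F : (NNReal → (Fin d → ℤ)) → ℝ) (hF : Measurable F) {D : Set (NNReal → (Fin d → ℤ))}
    (hD : MeasurableSet D) {a : ℝ} (ha : 0 < a) (hFa : ∀ p ∈ D, a ≤ F p) (k₀ : ℤ) :
    P 0 {ω | RC S ω ∧ (fun u : NNReal => T2 S u ω) ∈ D ∧
      S (F (fun u : NNReal => T2 S u ω)) ω 0 = k₀} ≤
      ENNReal.ofReal (C / √a) * P 0 {ω | (fun u : NNReal => T2 S u ω) ∈ D} := by
  have := hS.prob 0
  set Y : Ωw → (NNReal → (Fin d → ℤ)) := fun ω (u : NNReal) => T2 S u ω with hY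
  have mY : Measurable Y := measurable_pi_lambda _ fun u : NNReal => meas_T2 hS u
  let s : ℕ → Set Ωw := fun n => {ω | Y ω ∈ D ∧ S (gridT n (F (Y ω))) ω 0 = k₀}
  have hs : ∀ n, P 0 (s n) ≤ ENNReal.ofReal (C / √a) * P 0 {ω | Y ω ∈ D} := fun n => by
    let Dk : ℕ → Set (NNReal → (Fin d → ℤ)) := fun k => D ∩ {p | ⌈((n : ℝ) + 1) * F p⌉₊ = k}
    have mDk : ∀ k, MeasurableSet (Dk k) := fun k => hD.inter
      ((Nat.measurable_ceil.comp (hF.const_mul _)) (measurableSet_singleton k))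
    have hsub : s n ⊆ ⋃ k : ℕ, {ω | S ((k : ℝ) / ((n : ℝ) + 1)) ω 0 = k₀} ∩ {ω | Y ω ∈ Dk k} :=
      fun ω hω => by
        simp only [mem_iUnion]
        exact ⟨_, hω.2, hω.1, rfl⟩
    have hk : ∀ k : ℕ, P 0 ({ω | S ((k : ℝ) / ((n : ℝ) + 1)) ω 0 = k₀} ∩ {ω | Y ω ∈ Dk k}) ≤
        ENNReal.ofReal (C / √a) * P 0 {ω | Y ω ∈ Dk k} := fun k => by
      rcases (Dk k).eq_empty_or_nonempty with h | ⟨p, hp1, hp2⟩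
      · simp [h]
      · have hka : a ≤ (k : ℝ) / ((n : ℝ) + 1) := by
          have h1 := le_gridT n (F p)
          rw [gridT, hp2] at h1
          exact (hFa p hp1).trans h1
        have hk0 : 0 < (k : ℝ) / ((n : ℝ) + 1) := ha.trans_le hka
        have hi := (indep_proc hS hk0.le).measure_inter_preimage_eq_mul {k₀} (Dk k)
          (measurableSet_singleton _) (mDk k)
        refine hi.le.trans ?_
        gcongr
        · refine (prob_S1 hS hk0.le k₀).le.trans (ENNReal.ofReal_le_ofReal ?_)
          refine (hC _ hk0 _).trans ?_
          gcongr
        · exact le_rfl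
    refine (measure_mono hsub).trans ((measure_iUnion_le _).trans ((ENNReal.tsum_le_tsum hk).trans ?_))
    rw [ENNReal.tsum_mul_left, ← measure_iUnion]
    · gcongr
      exact iUnion_subset fun k ω hω => hω.1
    · intro k k' hkk
      exact Set.disjoint_left.2 fun ω h1 h2 => hkk (h1.2.symm.trans h2.2)
    · exact fun k => mY (mDk k)
  have hsub : {ω | RC S ω ∧ Y ω ∈ D ∧ S (F (Y ω)) ω 0 = k₀} ⊆ ⋃ n, ⋂ m, s (n + m) := fun ω hω => by
    obtain ⟨h1, h2, h3⟩ := hω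
    have hF0 : 0 ≤ F (Y ω) := ha.le.trans (hFa _ h2)
    obtain ⟨ε, hε, h⟩ := h1 _ hF0
    obtain ⟨N, hN⟩ := eventually_atTop.1 (gridT_eventually hF0 hε)
    simp only [mem_iUnion, mem_iInter]
    refine ⟨N, fun m => ⟨h2, ?_⟩⟩
    rw [h _ (le_gridT _ _) (hN _ (Nat.le_add_right _ _))]
    exact h3
  refine (measure_mono hsub).trans ?_
  rw [Monotone.measure_iUnion]
  · exact iSup_le fun n => (measure_mono (iInter_subset _ 0)).trans (hs _)
  · refine monotone_nat_of_le_succ fun n => ?_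
    refine subset_iInter fun m => (iInter_subset _ (1 + m)).trans ?_
    rw [← add_assoc]

end

open MeasureTheory ProbabilityTheory Filter Set
open scoped ENNReal

lemma qk_le {C : ℝ} (hC : ∀ t : ℝ, 0 < t → ∀ k : ℤ, h1 t k ≤ C / √t) {d : ℕ} {t : ℝ} (ht : 0 < t)
    (v : Fin d → ℤ) : qk d t v ≤ (C / √t) ^ d := by
  have : (C / √t) ^ d = ∏ _i : Fin d, (C / √t) := by
    rw [Finset.prod_const, Finset.card_univ, Fintype.card_fin]
  rw [this]
  exact Finset.prod_le_prod (fun _ _ => h1_nonneg ht.le _) fun _ _ => hC t ht _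

section
variable {d : ℕ} {Ωw : Type*} [MeasurableSpace Ωw]
    {P : (Fin (d + 1) → ℤ) → Measure Ωw} {S : ℝ → Ωw → (Fin (d + 1) → ℤ)}

lemma numerator_bound (hS : IsCTSRW (d + 1) P S) {C : ℝ} (hC0 : 0 < C)
    (hC : ∀ t : ℝ, 0 < t → ∀ k : ℤ, h1 t k ≤ C / √t) {t : ℝ} (ht : 2 ≤ t)
    (w : (Fin d → ℤ) → ℝ) (hw : ∀ y, 0 ≤ w y) (x : Fin d → ℤ) (hwx : 0 < w x) :
    P 0 {ω | S (∫ u in Ioc (0:ℝ) t, w (T2 S u ω)) ω 0 = 1 ∧ T2 S t ω = x} ≤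
      ENNReal.ofReal (2 * C * (8 * d + 1) * (C / √(t / 2)) ^ d / √(w x)) := by
  have := hS.prob 0
  set Y : Ωw → (NNReal → (Fin d → ℤ)) := fun ω (u : NNReal) => T2 S u ω with hY
  set M : ℝ := (C / √(t / 2)) ^ d with hMdef
  have hM0 : 0 ≤ M := by positivity
  have hM : ∀ s, t / 2 ≤ s → ∀ v : Fin d → ℤ, qk d s v ≤ M := fun s hs v => by
    refine (qk_le hC (by linarith) v).trans ?_
    have h2 : (0:ℝ) < t / 2 := by linarith
    have : 0 < √(t / 2) := by positivity
    rw [hMdef]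
    gcongr
  let δ : ℕ → ℝ := fun k => (1 / 4) ^ k
  have hδ0 : ∀ k, 0 < δ k := fun k => by positivity
  have hδ1 : ∀ k, δ k ≤ 1 := fun k => pow_le_one₀ (by norm_num) (by norm_num)
  have hhold : ∀ k, P 0 {ω | T2 S t ω = x ∧ Y ω ∉ Bset t (δ k) x} ≤
      ENNReal.ofReal (M * (2 * d * δ k)) := fun k =>
    holding hS (hδ0 k) (by linarith [hδ1 k]) x (hM _ (by linarith [hδ1 k]))
  let F : (NNReal → (Fin d → ℤ)) → ℝ := fun p => (Fpath t w p).toReal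
  have hF : Measurable F := (measurable_Fpath t w).ennreal_toReal
  let D : ℕ → Set (NNReal → (Fin d → ℤ)) := fun k =>
    {p | w x * δ k ≤ F p} ∩ ({p | p (Real.toNNReal t) = x} ∩ ⋂ j ∈ Finset.range k, (Bset t (δ j) x)ᶜ)
  have mD : ∀ k, MeasurableSet (D k) := fun k => by
    refine (measurableSet_le measurable_const hF).inter (MeasurableSet.inter ?_ ?_)
    · exact (measurable_pi_apply (X := fun _ : NNReal => Fin d → ℤ) (Real.toNNReal t))
        (measurableSet_singleton x)
    · exact Finset.measurableSet_biInter _ fun j _ => (measurableSet_Bset _ _ _).compl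
  have ht0 : ((Real.toNNReal t : NNReal) : ℝ) = t := Real.coe_toNNReal _ (by linarith)
  have hDk : ∀ k, P 0 {ω | Y ω ∈ D k} ≤ ENNReal.ofReal (M * (8 * d + 1) * δ k) := fun k => by
    cases k with
    | zero =>
      have hsub : {ω | Y ω ∈ D 0} ⊆ {ω | T2 S t ω = x} := fun ω hω => by
        have := hω.2.1
        simp only [hY, mem_ofPred_eq, ht0] at this
        exact this
      refine (measure_mono hsub).trans ?_
      rw [prob_T2 hS (by linarith)]
      apply ENNReal.ofReal_le_ofReal
      refine (hM t (by linarith) x).trans ?_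
      simp only [δ, pow_zero, mul_one]
      have : 0 ≤ M * (8 * d) := by positivity
      linarith
    | succ k =>
      have hsub : {ω | Y ω ∈ D (k + 1)} ⊆ {ω | T2 S t ω = x ∧ Y ω ∉ Bset t (δ k) x} := fun ω hω => by
        have h1 := hω.2.1
        have h2 := hω.2.2
        simp only [hY, mem_ofPred_eq, ht0] at h1
        rw [mem_iInter₂] at h2
        exact ⟨h1, h2 k (by simp)⟩
      refine (measure_mono hsub).trans ((hhold k).trans (ENNReal.ofReal_le_ofReal ?_))
      have e : δ (k + 1) = δ k / 4 := by simp only [δ, pow_succ]; ring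
      rw [e]
      have : 0 ≤ M * δ k := mul_nonneg hM0 (hδ0 k).le
      nlinarith
  -- null set
  have hnull : P 0 {ω | T2 S t ω = x ∧ ∀ k, Y ω ∉ Bset t (δ k) x} = 0 := by
    apply le_antisymm _ (zero_le)
    have hlim : Tendsto (fun k => ENNReal.ofReal (M * (2 * d * δ k))) atTop (nhds 0) := by
      have : Tendsto (fun k => M * (2 * d * δ k)) atTop (nhds (M * (2 * d * 0))) :=
        ((tendsto_pow_atTop_nhds_zero_of_lt_one (by norm_num) (by norm_num)).const_mul _).const_mul _
      have := ENNReal.tendsto_ofReal this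
      simpa using this
    have hs : ∀ k, {ω | T2 S t ω = x ∧ ∀ k, Y ω ∉ Bset t (δ k) x} ⊆
        {ω | T2 S t ω = x ∧ Y ω ∉ Bset t (δ k) x} := fun k ω hω => ⟨hω.1, hω.2 k⟩
    exact ge_of_tendsto hlim (Eventually.of_forall fun k =>
      (measure_mono (hs k)).trans (hhold k))
  -- inclusion
  have hRC : ∀ᵐ ω ∂ P 0, RC S ω := hS.rightCont 0
  have h00 : ∀ᵐ ω ∂ P 0, S 0 ω = 0 := hS.start 0
  have hN : P 0 {ω | ¬ (RC S ω ∧ S 0 ω = 0)} = 0 := by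
    have := hRC.and h00
    rwa [ae_iff] at this
  have hsub : {ω | S (∫ u in Ioc (0:ℝ) t, w (T2 S u ω)) ω 0 = 1 ∧ T2 S t ω = x} ⊆
      (⋃ k, {ω | RC S ω ∧ Y ω ∈ D k ∧ S (F (Y ω)) ω 0 = 1}) ∪
        ({ω | T2 S t ω = x ∧ ∀ k, Y ω ∉ Bset t (δ k) x} ∪ {ω | ¬ (RC S ω ∧ S 0 ω = 0)}) := by
    intro ω hω
    obtain ⟨hω1, hω2⟩ := hω
    by_cases hg : RC S ω ∧ S 0 ω = 0
    swap
    · exact Or.inr (Or.inr hg)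
    by_cases hb : ∀ k, Y ω ∉ Bset t (δ k) x
    · exact Or.inr (Or.inl ⟨hω2, hb⟩)
    left
    push Not at hb
    classical
    have hint : ∫ u in Ioc (0:ℝ) t, w (T2 S u ω) = F (Y ω) := by
      rw [integral_eq_lintegral_of_nonneg_ae (ae_of_all _ fun u => hw _)]
      · simp only [F]
        rw [Fpath_eq hS t w hg.1]
      · have mT : Measurable (fun u => T2 S u ω) :=
          (meas_T2_joint hS).comp (measurable_id.prodMk measurable_const)
        exact ((measurable_of_countable w).comp mT).aestronglyMeasurable
    rw [hint] at hω1
    have hfin : Fpath t w (Y ω) ≠ ⊤ := fun h => by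
      simp only [F, h, ENNReal.toReal_top, hg.2] at hω1
      simp at hω1
    have hk := Nat.find_spec hb
    have hk' := fun j (hj : j < Nat.find hb) => Nat.find_min hb hj
    refine mem_iUnion.2 ⟨Nat.find hb, hg.1, ⟨?_, ?_, ?_⟩, hω1⟩
    · have := Fpath_ge_of_Bset hS (hδ0 _) (by linarith [hδ1 (Nat.find hb)]) w hg.1 hwx.le hk
      exact (ENNReal.ofReal_le_iff_le_toReal hfin).1 this
    · simp only [hY, mem_ofPred_eq, ht0]; exact hω2
    · rw [mem_iInter₂]
      intro j hj
      exact hk' j (Finset.mem_range.1 hj)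
  refine (measure_mono hsub).trans ((measure_union_le _ _).trans ?_)
  rw [measure_union_null hnull hN, add_zero]
  refine (measure_iUnion_le _).trans ?_
  have hterm : ∀ k, P 0 {ω | RC S ω ∧ Y ω ∈ D k ∧ S (F (Y ω)) ω 0 = 1} ≤
      ENNReal.ofReal (C * (8 * d + 1) * M / √(w x) * (1 / 2) ^ k) := fun k => by
    refine (spread hS hC0 hC F hF (mD k) (mul_pos hwx (hδ0 k)) (fun p hp => hp.1) 1).trans ?_
    refine (mul_le_mul_right (hDk k) _).trans ?_
    rw [← ENNReal.ofReal_mul (by positivity)]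
    apply ENNReal.ofReal_le_ofReal
    have e1 : δ k = ((1 / 2) ^ k) ^ 2 := by
      simp only [δ]; rw [← pow_mul, mul_comm, pow_mul]; norm_num
    have e2 : √(w x * δ k) = √(w x) * (1 / 2) ^ k := by
      rw [Real.sqrt_mul hwx.le, e1, Real.sqrt_sq (by positivity)]
    rw [e2, e1]
    have : 0 < √(w x) := by positivity
    apply le_of_eq
    field_simp
  refine (ENNReal.tsum_le_tsum hterm).trans ?_
  have hs : HasSum (fun k : ℕ => C * (8 * d + 1) * M / √(w x) * (1 / 2) ^ k)
      (C * (8 * d + 1) * M / √(w x) * 2) := hasSum_geometric_two.mul_left _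
  rw [← ENNReal.ofReal_tsum_of_nonneg (fun k => by positivity) hs.summable, hs.tsum_eq]
  apply ENNReal.ofReal_le_ofReal
  apply le_of_eq; ring

lemma denominator_eq (hS : IsCTSRW (d + 1) P S) {s t : ℝ} (hs : 0 ≤ s) (ht : 0 ≤ t) (k : ℤ)
    (x : Fin d → ℤ) : (P 0 {ω | (S s ω 0, fun i => S t ω i.succ) = (k, x)}).toReal =
      h1 s k * qk d t x := by
  have := hS.prob 0
  have hi := (indep_proc hS hs).measure_inter_preimage_eq_mul {k} {p | p (Real.toNNReal t) = x}
    (measurableSet_singleton _)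
    ((measurable_pi_apply (X := fun _ : NNReal => Fin d → ℤ) (Real.toNNReal t))
        (measurableSet_singleton x))
  have ht0 : ((Real.toNNReal t : NNReal) : ℝ) = t := Real.coe_toNNReal _ ht
  have e1 : {ω | (S s ω 0, fun i => S t ω i.succ) = (k, x)} = (fun ω => S s ω 0) ⁻¹' {k} ∩
      (fun ω (u : NNReal) => T2 S u ω) ⁻¹' {p | p (Real.toNNReal t) = x} := by
    ext ω
    simp only [mem_ofPred_eq, Prod.mk.injEq, mem_inter_iff, mem_preimage, mem_singleton_iff, ht0]
    rfl
  have e2 : (fun ω (u : NNReal) => T2 S u ω) ⁻¹' {p | p (Real.toNNReal t) = x} =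
      {ω | T2 S t ω = x} := by
    ext ω; simp only [mem_preimage, mem_ofPred_eq, ht0]
  have e3 : (fun ω => S s ω 0) ⁻¹' {k} = {ω | S s ω 0 = k} := rfl
  rw [e1, hi, e2, e3, prob_S1 hS hs, prob_T2 hS ht, ENNReal.toReal_mul,
    ENNReal.toReal_ofReal (h1_nonneg hs _), ENNReal.toReal_ofReal (qk_nonneg ht _)]

end

open MeasureTheory ProbabilityTheory Filter Set
open scoped ENNReal

section
variable {d : ℕ} {α : ℝ} {Ωz : Type*} [MeasurableSpace Ωz]
    {μ : Measure Ωz} {z : (Fin d → ℤ) → Ωz → ℝ}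

lemma tail_lower (hz : IsScenery d α μ z) (hα : 0 < α) {α' : ℝ} (h : α < α') :
    ∀ᶠ r : ℝ in atTop, r ^ (-α') ≤ (μ {ω | r < z 0 ω}).toReal := by
  have h1 := hz.tail.eventually (lt_mem_nhds (show -α' < -α by linarith))
  have h2 := hz.tail.eventually (gt_mem_nhds (show -α < 0 by linarith))
  filter_upwards [h1, h2, eventually_gt_atTop 1] with r a b hr
  have hl : 0 < Real.log r := Real.log_pos hr
  set p := (μ {ω | r < z 0 ω}).toReal with hp
  have hp0 : 0 < p := by
    have hpn : 0 ≤ p := ENNReal.toReal_nonneg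
    rcases hpn.eq_or_lt with h | h
    · rw [← h] at b; simp at b
    · exact h
  rw [lt_div_iff₀ hl] at a
  rw [Real.rpow_def_of_pos (by linarith), ← Real.exp_log hp0]
  apply Real.exp_le_exp.2
  linarith

lemma mean_pos (hz : IsScenery d α μ z) (hα : 0 < α) (hint : Integrable (z 0) μ) :
    0 < ∫ ζ, z 0 ζ ∂μ := by
  refine (integral_nonneg (hz.nonneg 0)).lt_of_ne fun h => ?_
  rw [eq_comm, integral_eq_zero_iff_of_nonneg (hz.nonneg 0) hint] at h
  obtain ⟨r, hr, hr0⟩ := ((tail_lower hz hα (lt_add_one α)).and (eventually_gt_atTop 0)).exists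
  have : μ {ω | r < z 0 ω} = 0 := by
    refine measure_mono_null (fun ω hω => ?_) (ae_iff.1 h)
    intro h0
    have h1 : r < z 0 ω := hω
    rw [h0] at h1
    simp at h1
    linarith
  rw [this] at hr
  simp at hr
  exact absurd hr (not_le.2 (Real.rpow_pos_of_pos hr0 _))

/-- discrete box -/
noncomputable def boxN (d n : ℕ) : Finset (Fin d → ℤ) := Fintype.piFinset fun _ => Finset.Ico (0 : ℤ) n

lemma fail_bound (hz : IsScenery d α μ z) (hα : 0 < α) {α' β : ℝ} (h : α < α') (hβ : 0 < β) :
    ∀ᶠ n : ℕ in atTop, μ {ζ | ∀ x ∈ boxN d n, z x ζ ≤ (n : ℝ) ^ β} ≤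
      ENNReal.ofReal (Real.exp (-(n : ℝ) ^ ((d : ℝ) - β * α'))) := by
  have := hz.prob
  have hlim : Tendsto (fun n : ℕ => (n : ℝ) ^ β) atTop atTop :=
    (tendsto_rpow_atTop hβ).comp tendsto_natCast_atTop_atTop
  filter_upwards [hlim.eventually (tail_lower hz hα h), eventually_gt_atTop 0] with n hn hn0
  have hn0' : (0:ℝ) < n := by exact_mod_cast hn0
  set s := (n : ℝ) ^ β with hs
  set p := (μ {ω | s < z 0 ω}).toReal with hp
  have e : {ζ | ∀ x ∈ boxN d n, z x ζ ≤ s} = ⋂ x ∈ boxN d n, z x ⁻¹' (Iic s) := by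
    ext ζ; simp
  rw [e, hz.indep.measure_inter_preimage_eq_mul (boxN d n) (fun _ _ => measurableSet_Iic)]
  have h1 : ∀ x, μ (z x ⁻¹' (Iic s)) = ENNReal.ofReal (1 - p) := fun x => by
    rw [(hz.ident x).measure_preimage_eq measurableSet_Iic]
    have hc : z 0 ⁻¹' (Iic s) = {ω | s < z 0 ω}ᶜ := by ext; simp
    have hm : MeasurableSet {ω | s < z 0 ω} := measurableSet_lt measurable_const (hz.meas 0)
    rw [hc, prob_compl_eq_one_sub hm, ENNReal.ofReal_sub _ ENNReal.toReal_nonneg,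
      ENNReal.ofReal_toReal (measure_ne_top _ _), ENNReal.ofReal_one]
  have hp1 : p ≤ 1 := by
    have := ENNReal.toReal_mono ENNReal.one_ne_top (prob_le_one (μ := μ) (s := {ω | s < z 0 ω}))
    simpa using this
  simp only [h1, Finset.prod_const]
  rw [← ENNReal.ofReal_pow (by linarith)]
  apply ENNReal.ofReal_le_ofReal
  have hcard : (boxN d n).card = n ^ d := by simp [boxN]
  rw [hcard]
  calc (1 - p) ^ (n ^ d) ≤ (Real.exp (-p)) ^ (n ^ d) := by
        apply pow_le_pow_left₀ (by linarith)
        linarith [Real.add_one_le_exp (-p)]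
    _ = Real.exp (-((n : ℝ) ^ d * p)) := by rw [← Real.exp_nat_mul]; congr 1; push_cast; ring
    _ ≤ _ := by
        apply Real.exp_le_exp.2
        have : (n : ℝ) ^ ((d : ℝ) - β * α') = (n : ℝ) ^ d * s ^ (-α') := by
          rw [hs, ← Real.rpow_mul hn0'.le, ← Real.rpow_natCast, ← Real.rpow_add hn0']
          congr 1; ring
        rw [this]
        have := mul_le_mul_of_nonneg_left hn (by positivity : (0:ℝ) ≤ (n:ℝ)^d)
        linarith

lemma summable_exp_rpow {κ : ℝ} (hκ : 0 < κ) :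
    Summable (fun n : ℕ => Real.exp (-(n : ℝ) ^ κ)) := by
  obtain ⟨k, hk⟩ := exists_nat_gt (2 / κ)
  have hk2 : 1 < κ * k := by rw [div_lt_iff₀ hκ] at hk; linarith
  have hs : Summable (fun n : ℕ => (k.factorial : ℝ) * (1 / (n : ℝ) ^ (κ * k))) :=
    (Real.summable_one_div_nat_rpow.2 hk2).mul_left _
  refine Summable.of_norm_bounded_eventually_nat hs ?_
  filter_upwards [eventually_gt_atTop 0] with n hn
  have hn' : (0:ℝ) < n := by exact_mod_cast hn
  have hy : 0 < (n : ℝ) ^ κ := by positivity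
  have := Real.pow_div_factorial_le_exp _ hy.le k
  rw [Real.norm_of_nonneg (Real.exp_pos _).le, Real.exp_neg, Real.rpow_mul hn'.le, Real.rpow_natCast]
  rw [mul_one_div, ← inv_div]
  gcongr

lemma scenery_large (hd : 3 ≤ d) (hα₁ : 1 ≤ α) (hα₂ : α < d / 2) (hz : IsScenery d α μ z)
    {ρ : ℝ} (hρ : 0 < ρ) : ∀ᵐ ζ ∂μ, ∀ Λ : ℝ, 0 < Λ → ∀ᶠ t : ℝ in atTop,
      ∃ x : Fin d → ℤ, (∀ i, |(x i : ℝ)| ≤ ρ * √t) ∧ Λ * t < z x ζ := by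
  have := hz.prob
  have hα : 0 < α := by linarith
  obtain ⟨α', ha1, ha2⟩ := exists_between hα₂
  have hα' : 0 < α' := by linarith
  have h2 : 2 < (d : ℝ) / α' := by rw [lt_div_iff₀ hα']; linarith
  obtain ⟨β, hb1, hb2⟩ := exists_between h2
  have hκ : 0 < (d : ℝ) - β * α' := by rw [lt_div_iff₀ hα'] at hb2; linarith
  have hsum : ∑' n : ℕ, μ {ζ | ∀ x ∈ boxN d n, z x ζ ≤ (n : ℝ) ^ β} ≠ ⊤ := by
    obtain ⟨N, hN⟩ := eventually_atTop.1 (fail_bound hz hα ha1 (by linarith : 0 < β))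
    have hb : ∀ n : ℕ, μ {ζ | ∀ x ∈ boxN d n, z x ζ ≤ (n : ℝ) ^ β} ≤
        (if n ∈ Finset.range N then 1 else 0) +
        ENNReal.ofReal (Real.exp (-(n : ℝ) ^ ((d : ℝ) - β * α'))) := fun n => by
      split_ifs with h
      · exact prob_le_one.trans le_self_add
      · rw [zero_add]; exact hN n (by simpa using h)
    refine ne_top_of_le_ne_top ?_ (ENNReal.tsum_le_tsum hb)
    rw [ENNReal.tsum_add]
    refine ENNReal.add_ne_top.2 ⟨?_, (summable_exp_rpow hκ).tsum_ofReal_ne_top⟩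
    rw [tsum_eq_sum (s := Finset.range N) (fun n hn => by simp only [hn, if_false])]
    exact ENNReal.sum_ne_top.2 fun n _ => by split_ifs <;> simp
  have hbc := ae_eventually_notMem hsum
  filter_upwards [hbc] with ζ hζ Λ hΛ
  have hfl : Tendsto (fun t : ℝ => ⌊ρ * √t⌋₊) atTop atTop :=
    tendsto_nat_floor_atTop.comp ((Real.tendsto_sqrt_atTop).const_mul_atTop hρ)
  have hpow : Tendsto (fun n : ℕ => (n : ℝ) ^ (β - 2)) atTop atTop :=
    (tendsto_rpow_atTop (by linarith)).comp tendsto_natCast_atTop_atTop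
  filter_upwards [hfl.eventually hζ, hfl.eventually (hpow.eventually_ge_atTop (4 * Λ / ρ ^ 2)),
    hfl.eventually (eventually_ge_atTop 1), eventually_gt_atTop 0] with t h1 h3 h4 ht
  set n := ⌊ρ * √t⌋₊ with hn
  simp only [mem_ofPred_eq, not_forall, not_le] at h1
  obtain ⟨x, hx, hxz⟩ := h1
  have hn1 : (1:ℝ) ≤ n := by exact_mod_cast h4
  have hnle : (n : ℝ) ≤ ρ * √t := Nat.floor_le (by positivity)
  have hnge : ρ * √t < n + 1 := Nat.lt_floor_add_one _
  refine ⟨x, fun i => ?_, lt_of_le_of_lt ?_ hxz⟩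
  · have := (Fintype.mem_piFinset.1 hx) i
    rw [Finset.mem_Ico] at this
    have a : (0:ℝ) ≤ x i := by exact_mod_cast this.1
    have b : (x i : ℝ) < n := by exact_mod_cast this.2
    rw [abs_of_nonneg a]; linarith
  · have e : (n : ℝ) ^ β = (n : ℝ) ^ 2 * (n : ℝ) ^ (β - 2) := by
      rw [← Real.rpow_natCast, ← Real.rpow_add (by linarith)]; congr 1; push_cast; ring
    have hhalf : ρ * √t / 2 ≤ n := by linarith
    have hsq : (ρ * √t / 2) ^ 2 ≤ (n : ℝ) ^ 2 := by gcongr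
    have hsq' : (ρ * √t / 2) ^ 2 = ρ ^ 2 * t / 4 := by
      rw [div_pow, mul_pow, Real.sq_sqrt ht.le]; norm_num
    rw [e]
    calc Λ * t = (ρ ^ 2 * t / 4) * (4 * Λ / ρ ^ 2) := by field_simp
      _ ≤ _ := by
        rw [← hsq']
        gcongr
end

open MeasureTheory ProbabilityTheory Filter Set
open scoped ENNReal

lemma qk_ge {c r : ℝ} (hc : 0 < c)
    (h : ∀ t : ℝ, 1 ≤ t → ∀ k : ℤ, |(k:ℝ)| ≤ r * √t → c / √t ≤ h1 t k) {d : ℕ} {t : ℝ}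
    (ht : 1 ≤ t) (v : Fin d → ℤ) (hv : ∀ i, |(v i : ℝ)| ≤ r * √t) :
    (c / √t) ^ d ≤ qk d t v := by
  have : (c / √t) ^ d = ∏ _i : Fin d, (c / √t) := by
    rw [Finset.prod_const, Finset.card_univ, Fintype.card_fin]
  rw [this]
  exact Finset.prod_le_prod (fun _ _ => by positivity) fun i _ => h t ht _ (hv i)

lemma norm_ok {d : ℕ} (hd : 1 ≤ d) {R ρ t : ℝ} (hR : 0 < R) (hρ : 0 < ρ) (hρR : ρ ≤ R / (2 * d))
    (ht : 0 < t) (htR : 2 / R ^ 2 ≤ t) (x : Fin d → ℤ) (hx : ∀ i, |(x i : ℝ)| ≤ ρ * √t) :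
    euclNormProd d (1, x) ≤ R * t ^ ((1 : ℝ) / 2) := by
  rw [← Real.sqrt_eq_rpow]
  unfold euclNormProd
  apply Real.sqrt_le_iff.2
  refine ⟨by positivity, ?_⟩
  have hd' : (1 : ℝ) ≤ d := by exact_mod_cast hd
  have h1 : ∀ i, (x i : ℝ) ^ 2 ≤ ρ ^ 2 * t := fun i => by
    have := pow_le_pow_left₀ (abs_nonneg _) (hx i) 2
    rwa [sq_abs, mul_pow, Real.sq_sqrt ht.le] at this
  have h2 : ∑ i, (x i : ℝ) ^ 2 ≤ d * (ρ ^ 2 * t) := by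
    refine (Finset.sum_le_sum fun i _ => h1 i).trans (le_of_eq ?_)
    rw [Finset.sum_const, Finset.card_univ, Fintype.card_fin, nsmul_eq_mul]
  have h3 : (d : ℝ) * ρ ^ 2 ≤ R ^ 2 / 4 := by
    have a : ρ * (2 * d) ≤ R := (le_div_iff₀ (by positivity)).1 hρR
    have b := pow_le_pow_left₀ (by positivity) a 2
    have e : 0 ≤ ρ ^ 2 * d * (d - 1) := by
      have : (0:ℝ) ≤ d - 1 := by linarith
      positivity
    nlinarith
  have h4 : 2 ≤ R ^ 2 * t := by
    rw [div_le_iff₀ (by positivity)] at htR; linarith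
  have h5 : (d : ℝ) * (ρ ^ 2 * t) ≤ R ^ 2 / 4 * t := by
    rw [← mul_assoc]; exact mul_le_mul_of_nonneg_right h3 ht.le
  rw [mul_pow, Real.sq_sqrt ht.le]
  push_cast
  nlinarith

lemma ratio_bound {C c m Λ t W N D : ℝ} {d : ℕ} (hC : 0 < C) (hc : 0 < c) (hm : 0 < m)
    (hΛ : 0 < Λ) (ht : 0 < t) (hW : Λ * t < W)
    (hN : N ≤ 2 * C * (8 * d + 1) * (C / √(t / 2)) ^ d / √W)
    (hD : c / √(m * t) * (c / √t) ^ d ≤ D) :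
    N / D ≤ 2 * C * (8 * d + 1) * (C * √2) ^ d * √m / (c * c ^ d) / √Λ := by
  have hs : 0 < √t := Real.sqrt_pos.2 ht
  have hsm : 0 < √m := Real.sqrt_pos.2 hm
  have hsΛ : 0 < √Λ := Real.sqrt_pos.2 hΛ
  have hmt : √(m * t) = √m * √t := Real.sqrt_mul hm.le t
  have hw : √Λ * √t ≤ √W := by
    rw [← Real.sqrt_mul hΛ.le]; exact Real.sqrt_le_sqrt hW.le
  have hD0 : 0 < c / √(m * t) * (c / √t) ^ d := by rw [hmt]; positivity
  have hN' : N ≤ 2 * C * (8 * d + 1) * (C / √(t / 2)) ^ d / (√Λ * √t) := by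
    refine hN.trans ?_
    gcongr
  have h0 : 0 ≤ 2 * C * (8 * d + 1) * (C / √(t / 2)) ^ d / (√Λ * √t) := by positivity
  refine (div_le_div₀ h0 hN' hD0 hD).trans (le_of_eq ?_)
  rw [hmt, Real.sqrt_div ht.le]
  have e : C / (√t / √2) = C * √2 / √t := by field_simp
  rw [e, div_pow, div_pow]
  field_simp

/-- Proposition (failure of the quenched local CLT for `d ≥ 3`, `1 ≤ α < d/2`):
for every `R > 0`, ℙ-a.s., `inf_{|x| ≤ R√t} P₀^ω(X_t = x)/P̄₀(X_t = x) → 0` as `t → ∞`,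
where `P̄₀(X_t = x) = P₀((S¹_{𝔼[z(0)]t}, S²_t) = x)` is the averaged-conductance kernel. -/
theorem stmt9 (d : ℕ) (hd : 3 ≤ d) (α : ℝ) (hα₁ : 1 ≤ α) (hα₂ : α < d / 2)
    {Ωz Ωw : Type*} [MeasurableSpace Ωz] [MeasurableSpace Ωw]
    (μ : Measure Ωz) (z : (Fin d → ℤ) → Ωz → ℝ) (hz : IsScenery d α μ z)
    (hint : Integrable (z 0) μ)
    (P : (Fin (d + 1) → ℤ) → Measure Ωw) (S : ℝ → Ωw → (Fin (d + 1) → ℤ))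
    (hS : IsCTSRW (d + 1) P S) :
    ∀ R > (0 : ℝ), ∀ᵐ ζ ∂ μ, ∀ ε > (0 : ℝ), ∀ᶠ t in (atTop : Filter ℝ),
      ∃ x : ℤ × (Fin d → ℤ), euclNormProd d x ≤ R * t ^ ((1 : ℝ) / 2) ∧
        ((P 0) {ω | layeredWalk d z S t ζ ω = x}).toReal
            / ((P 0) {ω | (S ((∫ ζ', z 0 ζ' ∂ μ) * t) ω 0, fun i => S t ω i.succ) = x}).toReal
          < ε := by
  intro R hR
  obtain ⟨C, hC0, hC⟩ := h1_le
  obtain ⟨c, r, hc0, hr0, hc⟩ := h1_ge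
  have hα : 0 < α := by linarith
  have hm : 0 < ∫ ζ', z 0 ζ' ∂ μ := mean_pos hz hα hint
  set m := ∫ ζ', z 0 ζ' ∂ μ with hmdef
  have hd1 : 1 ≤ d := by omega
  have hd0 : (0 : ℝ) < d := by exact_mod_cast hd1
  have hρ : 0 < min r (R / (2 * d)) := lt_min hr0 (by positivity)
  filter_upwards [scenery_large hd hα₁ hα₂ hz hρ] with ζ hζ
  intro ε hε
  set K := 2 * C * (8 * d + 1) * (C * √2) ^ d * √m / (c * c ^ d) with hK
  have hK0 : 0 < K := by
    have := Real.sqrt_pos.2 hm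
    positivity
  have hΛ0 : 0 < ((K + 1) / ε) ^ 2 := by positivity
  have hΛs : √(((K + 1) / ε) ^ 2) = (K + 1) / ε := Real.sqrt_sq (by positivity)
  filter_upwards [hζ _ hΛ0, eventually_ge_atTop 2, eventually_ge_atTop (1 / m),
    eventually_ge_atTop ((1 / r) ^ 2 / m), eventually_ge_atTop (2 / R ^ 2)]
    with t hx ht2 htm htr htR
  obtain ⟨x, hxb, hxΛ⟩ := hx
  have ht0 : 0 < t := by linarith
  refine ⟨(1, x), norm_ok hd1 hR hρ (min_le_right _ _) ht0 htR x hxb, ?_⟩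
  have hmt1 : 1 ≤ m * t := by
    rw [div_le_iff₀ hm] at htm; linarith
  have hwx : 0 < z x ζ := lt_trans (by positivity) hxΛ
  have hnum := numerator_bound hS hC0 hC ht2 (fun y => z y ζ) (fun y => hz.nonneg y ζ) x hwx
  have hset : {ω | layeredWalk d z S t ζ ω = (1, x)} =
      {ω | S (∫ u in Ioc (0:ℝ) t, (fun y => z y ζ) (T2 S u ω)) ω 0 = 1 ∧ T2 S t ω = x} := by
    ext ω
    exact Prod.mk_inj
  rw [← hset] at hnum
  have hnum' := ENNReal.toReal_le_of_le_ofReal (by positivity) hnum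
  rw [denominator_eq hS (by positivity) ht0.le]
  have hk1 : c / √(m * t) ≤ h1 (m * t) 1 := by
    apply hc _ hmt1
    rw [div_le_iff₀ hm] at htr
    have : 1 / r ≤ √(m * t) := Real.le_sqrt_of_sq_le (by linarith)
    rw [div_le_iff₀ hr0] at this
    simp
    linarith
  have hq : (c / √t) ^ d ≤ qk d t x := by
    refine qk_ge hc0 hc (by linarith) x fun i => (hxb i).trans ?_
    exact mul_le_mul_of_nonneg_right (min_le_left _ _) (Real.sqrt_nonneg _)
  have hden : c / √(m * t) * (c / √t) ^ d ≤ h1 (m * t) 1 * qk d t x :=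
    mul_le_mul hk1 hq (by positivity) (h1_nonneg (by positivity) _)
  have := ratio_bound hC0 hc0 hm hΛ0 ht0 hxΛ hnum' hden
  refine this.trans_lt ?_
  rw [hΛs, ← hK, div_div_eq_mul_div, div_lt_iff₀ (by positivity)]
  nlinarith
end

section
/- Let d ≥ 3, 0 < α < d/2, ρ ∈ (max(1/α, 1), d/(2α)), and let ε > 0 satisfy αρ/d + ε < 1/2. For t > 0 and integers k ≥ 1 let D(k) = {x ∈ ℤ^d : k·t^{αρ/d+ε} ≤ |x| < (k+1)·t^{αρ/d+ε}} with |·| the Euclidean norm. Then ℙ-almost surely, for all sufficiently large t and all integers k with 1 ≤ k ≤ t^{1/2 − αρ/d − ε}, the cardinality of {x ∈ D(k) : z(x) ≥ t^ρ} lies strictly between k^{d−1} t^{(d−1)ε} and k^{d−1} t^{(d+1)ε}. -/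
open MeasureTheory ProbabilityTheory Filter Set

open MeasureTheory ProbabilityTheory Filter Set

/-- Euclidean norm of a point of `ℤ^d`. -/
noncomputable def euclNorm (d : ℕ) (x : Fin d → ℤ) : ℝ :=
  Real.sqrt (∑ i, (x i : ℝ) ^ 2)

/-- Euclidean norm on `Fin d → ℝ`. -/
noncomputable def enrm {d : ℕ} (v : Fin d → ℝ) : ℝ := ‖(WithLp.toLp 2 v : EuclideanSpace ℝ (Fin d))‖

lemma enrm_eq {d : ℕ} (v : Fin d → ℝ) : enrm v = Real.sqrt (∑ i, (v i) ^ 2) := by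
  simp [enrm, EuclideanSpace.norm_eq]

lemma enrm_cast {d : ℕ} (x : Fin d → ℤ) : enrm (fun i => (x i : ℝ)) = euclNorm d x := by
  rw [enrm_eq]; rfl

lemma enrm_sub_le {d : ℕ} (v w : Fin d → ℝ) : enrm v ≤ enrm w + enrm (v - w) := by
  have := norm_add_le (WithLp.toLp 2 w : EuclideanSpace ℝ (Fin d)) (WithLp.toLp 2 (v - w))
  rw [← WithLp.toLp_add, add_sub_cancel] at this
  exact this

lemma enrm_neg {d : ℕ} (v w : Fin d → ℝ) : enrm (v - w) = enrm (w - v) := by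
  unfold enrm
  rw [WithLp.toLp_sub, WithLp.toLp_sub, norm_sub_rev]

lemma enrm_smul {d : ℕ} (r : ℝ) (v : Fin d → ℝ) : enrm (r • v) = |r| * enrm v := by
  unfold enrm
  rw [WithLp.toLp_smul, norm_smul, Real.norm_eq_abs]

lemma abs_le_enrm {d : ℕ} (v : Fin d → ℝ) (i : Fin d) : |v i| ≤ enrm v := by
  have := PiLp.norm_apply_le (WithLp.toLp 2 v : EuclideanSpace ℝ (Fin d)) i
  simpa [enrm] using this

lemma continuous_enrm {d : ℕ} : Continuous (enrm : (Fin d → ℝ) → ℝ) := by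
  unfold enrm
  fun_prop

/-- Open Euclidean ball. -/
def eball (d : ℕ) (R : ℝ) : Set (Fin d → ℝ) := {v | enrm v < R}

lemma isOpen_eball (d : ℕ) (R : ℝ) : IsOpen (eball d R) :=
  isOpen_lt continuous_enrm continuous_const

lemma eball_subset (d : ℕ) (R : ℝ) : eball d R ⊆ Metric.closedBall 0 R := by
  intro v hv
  have h0 : 0 ≤ enrm v := norm_nonneg _
  have hv' : enrm v < R := hv
  rw [mem_closedBall_zero_iff, pi_norm_le_iff_of_nonneg (by linarith)]
  intro i
  exact (abs_le_enrm v i).trans hv'.le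

lemma eball_lt_top (d : ℕ) (R : ℝ) : volume (eball d R) ≠ ⊤ :=
  ((measure_mono (eball_subset d R)).trans_lt
    (isCompact_closedBall (0 : Fin d → ℝ) R).measure_lt_top).ne

lemma eball_pos (d : ℕ) : 0 < volume.real (eball d 1) := by
  refine ENNReal.toReal_pos ?_ (eball_lt_top d 1)
  exact ((isOpen_eball d 1).measure_pos volume ⟨0, by simp [eball, enrm]⟩).ne'

open scoped Pointwise in
lemma eball_vol (d : ℕ) {R : ℝ} (hR : 0 < R) :
    volume.real (eball d R) = R ^ d * volume.real (eball d 1) := by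
  have : eball d R = R • eball d 1 := by
    ext v
    rw [Set.mem_smul_set_iff_inv_smul_mem₀ hR.ne']
    simp only [eball, mem_ofPred_eq, enrm_smul, abs_inv, abs_of_pos hR]
    rw [inv_mul_lt_iff₀ hR, mul_one]
  rw [this, Measure.real, Measure.addHaar_smul, ENNReal.toReal_mul, Measure.real]
  have := pow_pos hR d
  simp [abs_of_pos hR, this.le]

/-- Unit cube. -/
def ucube {d : ℕ} (x : Fin d → ℤ) : Set (Fin d → ℝ) :=
  Set.pi univ fun i => Ico (x i : ℝ) (x i + 1)

lemma mem_ucube {d : ℕ} (x : Fin d → ℤ) (v : Fin d → ℝ) : v ∈ ucube x ↔ ∀ i, ⌊v i⌋ = x i := by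
  simp [ucube, Int.floor_eq_iff]

lemma ucube_dist {d : ℕ} {x : Fin d → ℤ} {v : Fin d → ℝ} (h : v ∈ ucube x) :
    enrm (v - fun i => (x i : ℝ)) ≤ Real.sqrt d := by
  rw [enrm_eq]
  apply Real.sqrt_le_sqrt
  calc ∑ i, ((v - fun i => (x i : ℝ)) i) ^ 2 ≤ ∑ i : Fin d, (1 : ℝ) := by
        apply Finset.sum_le_sum
        intro i _
        have := h i (mem_univ i)
        simp only [mem_Ico] at this
        simp only [Pi.sub_apply]
        nlinarith [this.1, this.2]
    _ = d := by simp

lemma ann_finite (d : ℕ) (r R : ℝ) : {x : Fin d → ℤ | r ≤ euclNorm d x ∧ euclNorm d x < R}.Finite := by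
  apply (Set.Finite.pi' (fun _ : Fin d => Set.finite_Icc (-⌈R⌉) ⌈R⌉)).subset
  intro x hx i
  have h := abs_le_enrm (fun i => (x i : ℝ)) i
  rw [enrm_cast] at h
  have h2 : |(x i : ℝ)| ≤ (⌈R⌉ : ℝ) := (h.trans hx.2.le).trans (Int.le_ceil R)
  rw [abs_le] at h2
  exact ⟨by exact_mod_cast h2.1, by exact_mod_cast h2.2⟩

lemma card_eq_vol {d : ℕ} (A : Finset (Fin d → ℤ)) :
    (A.card : ℝ) = volume.real (⋃ x ∈ A, ucube x) := by
  have hc : ∀ x : Fin d → ℤ, volume (ucube x) = 1 := by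
    intro x
    rw [ucube, Real.volume_pi_Ico]
    simp
  rw [measureReal_biUnion_finset _ _ (fun x _ => by rw [hc]; simp)]
  · simp [Measure.real, hc]
  · intro x _ y _ hxy
    rw [Function.onFun, Set.disjoint_left]
    intro v hv hv'
    rw [mem_ucube] at hv hv'
    exact hxy (funext fun i => (hv i).symm.trans (hv' i))
  · intro x _
    exact MeasurableSet.univ_pi fun i => measurableSet_Ico

lemma union_lt_top {d : ℕ} (A : Finset (Fin d → ℤ)) :
    volume (⋃ x ∈ A, ucube x) ≠ ⊤ := by
  refine ((measure_biUnion_finset_le A _).trans_lt ?_).ne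
  rw [ENNReal.sum_lt_top]
  intro x _
  rw [ucube, Real.volume_pi_Ico]
  simp

/-- Lattice points in an annulus. -/
noncomputable def ann (d : ℕ) (r R : ℝ) : Finset (Fin d → ℤ) := (ann_finite d r R).toFinset

lemma mem_ann {d : ℕ} {r R : ℝ} {x : Fin d → ℤ} :
    x ∈ ann d r R ↔ r ≤ euclNorm d x ∧ euclNorm d x < R := by
  simp [ann]

lemma ann_lower (d : ℕ) (r R : ℝ) (hr : 0 < r + Real.sqrt d) (hR : 0 < R - Real.sqrt d) :
    volume.real (eball d 1) * ((R - Real.sqrt d) ^ d - (r + Real.sqrt d) ^ d)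
      ≤ (ann d r R).card := by
  rw [card_eq_vol]
  have h1 : eball d (R - Real.sqrt d) \ eball d (r + Real.sqrt d) ⊆ ⋃ x ∈ ann d r R, ucube x := by
    intro v hv
    have hv1 : enrm v < R - Real.sqrt d := hv.1
    have hv2 : r + Real.sqrt d ≤ enrm v := not_lt.1 hv.2
    have hm : v ∈ ucube (fun i => ⌊v i⌋) := by rw [mem_ucube]; intro i; rfl
    have hd := ucube_dist hm
    have a1 := enrm_sub_le v (fun i => ((⌊v i⌋ : ℤ) : ℝ))
    have a2 := enrm_sub_le (fun i => ((⌊v i⌋ : ℤ) : ℝ)) v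
    rw [enrm_neg] at a2
    have e := enrm_cast (fun i => ⌊v i⌋)
    simp only [mem_iUnion]
    refine ⟨fun i => ⌊v i⌋, mem_ann.2 ⟨?_, ?_⟩, hm⟩ <;> linarith
  calc _ = volume.real (eball d (R - Real.sqrt d)) - volume.real (eball d (r + Real.sqrt d)) := by
        rw [eball_vol d hr, eball_vol d hR]; ring
    _ ≤ volume.real (eball d (R - Real.sqrt d) \ eball d (r + Real.sqrt d)) :=
        le_measureReal_sdiff (h := eball_lt_top _ _)
    _ ≤ _ := measureReal_mono h1 (union_lt_top _)

lemma ann_upper (d : ℕ) (r R : ℝ) (hr : 0 < r - Real.sqrt d) (hrR : r ≤ R) :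
    ((ann d r R).card : ℝ) ≤
    volume.real (eball d 1) * ((R + Real.sqrt d) ^ d - (r - Real.sqrt d) ^ d) := by
  rw [card_eq_vol]
  have hq := Real.sqrt_nonneg d
  have hR : 0 < R + Real.sqrt d := by linarith
  have h1 : (⋃ x ∈ ann d r R, ucube x) ⊆ eball d (R + Real.sqrt d) \ eball d (r - Real.sqrt d) := by
    intro v hv
    simp only [mem_iUnion] at hv
    obtain ⟨x, hx, hm⟩ := hv
    rw [mem_ann] at hx
    have hd := ucube_dist hm
    have a1 := enrm_sub_le v (fun i => (x i : ℝ))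
    have a2 := enrm_sub_le (fun i => (x i : ℝ)) v
    rw [enrm_neg] at a2
    have e := enrm_cast x
    refine ⟨?_, ?_⟩
    · change enrm v < _
      linarith [hx.2]
    · change ¬ (enrm v < _)
      linarith [hx.1]
  have hsub : eball d (r - Real.sqrt d) ⊆ eball d (R + Real.sqrt d) := by
    intro v hv
    have hv' : enrm v < r - Real.sqrt d := hv
    change enrm v < _
    linarith
  calc _ ≤ volume.real (eball d (R + Real.sqrt d) \ eball d (r - Real.sqrt d)) :=
        measureReal_mono h1 ((measure_mono sdiff_subset).trans_lt (eball_lt_top d _).lt_top).ne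
    _ = volume.real (eball d (R + Real.sqrt d)) - volume.real (eball d (r - Real.sqrt d)) :=
        measureReal_sdiff hsub (isOpen_eball _ _).measurableSet (eball_lt_top _ _)
    _ = _ := by
        rw [eball_vol d hr, eball_vol d hR]; ring

lemma pow_sub_lower {d : ℕ} (hd : 1 ≤ d) {x y : ℝ} (hx : 0 ≤ x) (hxy : x ≤ y) :
    (y - x) * x ^ (d - 1) ≤ y ^ d - x ^ d := by
  obtain ⟨m, rfl⟩ : ∃ m, d = m + 1 := ⟨d - 1, by omega⟩
  have := pow_le_pow_left₀ hx hxy m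
  simp only [Nat.add_sub_cancel, pow_succ]
  nlinarith

lemma pow_sub_upper (d : ℕ) {x y : ℝ} (hx : 0 ≤ x) (hxy : x ≤ y) :
    y ^ d - x ^ d ≤ (y - x) * (d * y ^ (d - 1)) := by
  have h := (Commute.all y x).mul_geom_sum₂ d
  rw [← h]
  apply mul_le_mul_of_nonneg_left _ (by linarith)
  calc _ ≤ ∑ i ∈ Finset.range d, y ^ (d - 1) := by
        apply Finset.sum_le_sum
        intro i hi
        have hi' := Finset.mem_range.1 hi
        calc y ^ i * x ^ (d - 1 - i) ≤ y ^ i * y ^ (d - 1 - i) := by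
              have : 0 ≤ y := hx.trans hxy
              gcongr
          _ = y ^ (d - 1) := by rw [← pow_add]; congr 1; omega
    _ = _ := by simp

/-- Lattice counting for the thinned and fattened annuli. Here `s = n^a`, `s' = (n+1)^a`. -/
lemma ann_thin (d : ℕ) (hd : 1 ≤ d) (k : ℕ) (s s' : ℝ) (hs : 0 < s) (hss : s ≤ s')
    (hk' : (k + 1) * (s' - s) ≤ s / 4) (hq : Real.sqrt d ≤ s / 8) :
    volume.real (eball d 1) / 2 * ((k : ℝ) ^ (d - 1) * s ^ d) ≤
      (ann d (k * s') ((k + 1) * s)).card := by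
  have hq0 := Real.sqrt_nonneg d
  have hk0 : (0 : ℝ) ≤ k := Nat.cast_nonneg k
  have hV := eball_pos d
  have hs' : 0 < s' := hs.trans_le hss
  have hd0 : 0 < Real.sqrt d := Real.sqrt_pos.2 (by exact_mod_cast hd)
  refine le_trans ?_ (ann_lower d _ _ (by positivity) (by nlinarith))
  have hdiff : s / 2 ≤ ((k + 1) * s - Real.sqrt d) - (k * s' + Real.sqrt d) := by nlinarith
  have h1 := pow_sub_lower hd (x := k * s' + Real.sqrt d) (y := (k + 1) * s - Real.sqrt d)
    (by positivity) (by linarith)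
  have h2 : s / 2 * (k * s) ^ (d - 1) ≤
      (((k + 1) * s - Real.sqrt d) - (k * s' + Real.sqrt d)) * (k * s' + Real.sqrt d) ^ (d - 1) := by
    apply mul_le_mul hdiff _ (by positivity) (by linarith)
    apply pow_le_pow_left₀ (by positivity)
    nlinarith
  have h3 : s / 2 * (k * s) ^ (d - 1) = (k : ℝ) ^ (d - 1) * s ^ d / 2 := by
    rw [mul_pow]
    obtain ⟨m, rfl⟩ : ∃ m, d = m + 1 := ⟨d - 1, by omega⟩
    simp only [Nat.add_sub_cancel, pow_succ]
    ring
  calc _ = volume.real (eball d 1) * (s / 2 * (k * s) ^ (d - 1)) := by rw [h3]; ring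
    _ ≤ _ := mul_le_mul_of_nonneg_left (h2.trans h1) hV.le

lemma ann_fat (d : ℕ) (hd : 1 ≤ d) (k : ℕ) (hk : 1 ≤ k) (s s' : ℝ) (hs : 0 < s) (hss : s ≤ s')
    (hk' : (k + 1) * (s' - s) ≤ s / 4) (hq : Real.sqrt d ≤ s / 8) :
    ((ann d (k * s) ((k + 1) * s')).card : ℝ) ≤
      volume.real (eball d 1) * (2 * d * 3 ^ (d - 1)) * ((k : ℝ) ^ (d - 1) * s ^ d) := by
  have hq0 := Real.sqrt_nonneg d
  have hk1 : (1 : ℝ) ≤ k := by exact_mod_cast hk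
  have hV := eball_pos d
  have hks : s ≤ k * s := by nlinarith
  refine (ann_upper d _ _ (by linarith) (by nlinarith)).trans ?_
  have hdiff : ((k + 1) * s' + Real.sqrt d) - (k * s - Real.sqrt d) ≤ 2 * s := by nlinarith
  have hle : (k * s - Real.sqrt d) ≤ ((k + 1) * s' + Real.sqrt d) := by nlinarith
  have h1 := pow_sub_upper d (x := k * s - Real.sqrt d) (y := (k + 1) * s' + Real.sqrt d)
    (by linarith) hle
  have h2 : (((k + 1) * s' + Real.sqrt d) - (k * s - Real.sqrt d)) *
      (d * ((k + 1) * s' + Real.sqrt d) ^ (d - 1)) ≤ 2 * s * (d * (3 * (k * s)) ^ (d - 1)) := by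
    have : 0 ≤ (k + 1) * s' + Real.sqrt d := by nlinarith
    gcongr
    nlinarith
  have h3 : 2 * s * (d * (3 * (k * s)) ^ (d - 1)) =
      (2 * d * 3 ^ (d - 1)) * ((k : ℝ) ^ (d - 1) * s ^ d) := by
    rw [mul_pow, mul_pow]
    obtain ⟨m, rfl⟩ : ∃ m, d = m + 1 := ⟨d - 1, by omega⟩
    simp only [Nat.add_sub_cancel, pow_succ]
    ring
  calc _ ≤ volume.real (eball d 1) * (2 * s * (d * (3 * (k * s)) ^ (d - 1))) :=
        mul_le_mul_of_nonneg_left (h1.trans h2) hV.le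
    _ = _ := by rw [h3]; ring

lemma mgf_ind {Ω : Type*} [MeasurableSpace Ω] (μ : Measure Ω) [IsProbabilityMeasure μ]
    {B : Set Ω} (hB : MeasurableSet B) (t : ℝ) :
    mgf (B.indicator (fun _ => (1 : ℝ))) μ t = 1 + μ.real B * (Real.exp t - 1) := by
  have : (fun ω => Real.exp (t * B.indicator (fun _ => (1 : ℝ)) ω)) =
      fun ω => 1 + B.indicator (fun _ => Real.exp t - 1) ω := by
    funext ω
    by_cases h : ω ∈ B <;> simp [h]
  rw [mgf, this, integral_add (integrable_const _) ((integrable_const _).indicator hB),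
    integral_indicator_const _ hB]
  simp

open Classical in
/-- Number of high points in `A`. -/
noncomputable def hcount {d : ℕ} {Ω : Type*} (z : (Fin d → ℤ) → Ω → ℝ) (A : Finset (Fin d → ℤ))
    (u : ℝ) (ω : Ω) : ℕ := (A.filter fun x => u < z x ω).card

lemma hcount_eq {d : ℕ} {Ω : Type*} (z : (Fin d → ℤ) → Ω → ℝ) (A : Finset (Fin d → ℤ))
    (u : ℝ) (ω : Ω) : hcount z A u ω = Set.ncard {x | x ∈ A ∧ u < z x ω} := by
  classical
  rw [hcount, ← Set.ncard_coe_finset]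
  congr 1
  ext x
  simp

lemma hcount_mgf {d : ℕ} {α : ℝ} {Ω : Type*} [MeasurableSpace Ω] {μ : Measure Ω}
    {z : (Fin d → ℤ) → Ω → ℝ} (hz : IsScenery d α μ z) (A : Finset (Fin d → ℤ)) (u t : ℝ) :
    Integrable (fun ω => Real.exp (t * (hcount z A u ω : ℝ))) μ ∧
    mgf (fun ω => (hcount z A u ω : ℝ)) μ t ≤
      Real.exp (A.card * (μ.real {ω | u < z 0 ω} * (Real.exp t - 1))) := by
  have := hz.prob
  have hB : ∀ x, MeasurableSet {ω | u < z x ω} := fun x =>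
    measurableSet_lt measurable_const (hz.meas x)
  have hcomp : ∀ x, ((Ioi u).indicator fun _ => (1 : ℝ)) ∘ z x =
      {ω | u < z x ω}.indicator fun _ => (1 : ℝ) := by
    intro x; funext ω
    by_cases h : u < z x ω <;> simp [h]
  have hsum : (fun ω => (hcount z A u ω : ℝ)) =
      ∑ x ∈ A, ((Ioi u).indicator fun _ => (1 : ℝ)) ∘ z x := by
    funext ω
    simp [hcount, Finset.sum_apply, Set.indicator_apply]
  have hind : iIndepFun (fun x => ((Ioi u).indicator fun _ => (1 : ℝ)) ∘ z x) μ :=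
    hz.indep.comp (fun _ => (Ioi u).indicator fun _ => (1 : ℝ))
      fun _ => measurable_const.indicator measurableSet_Ioi
  have hmeas : ∀ x, Measurable (((Ioi u).indicator fun _ => (1 : ℝ)) ∘ z x) := fun x =>
    (measurable_const.indicator measurableSet_Ioi).comp (hz.meas x)
  constructor
  · have hm : Measurable (fun ω => (hcount z A u ω : ℝ)) := by
      rw [hsum, Finset.sum_fn]; exact Finset.measurable_sum A fun x _ => hmeas x
    refine Integrable.of_bound (C := Real.exp (|t| * A.card)) ?_ ?_
    · exact (Real.measurable_exp.comp (measurable_const.mul hm)).aestronglyMeasurable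
    · refine Eventually.of_forall fun ω => ?_
      rw [Real.norm_eq_abs, Real.abs_exp, Real.exp_le_exp]
      have h1 : (hcount z A u ω : ℝ) ≤ A.card := by
        exact_mod_cast Finset.card_filter_le _ _
      calc t * (hcount z A u ω : ℝ) ≤ |t| * (hcount z A u ω : ℝ) := by
            gcongr; exact le_abs_self t
        _ ≤ _ := by gcongr
  · rw [hsum, hind.mgf_sum hmeas]
    have hx : ∀ x, mgf (((Ioi u).indicator fun _ => (1 : ℝ)) ∘ z x) μ t ≤
        Real.exp (μ.real {ω | u < z 0 ω} * (Real.exp t - 1)) := by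
      intro x
      rw [hcomp, mgf_ind μ (hB x)]
      have : μ.real {ω | u < z x ω} = μ.real {ω | u < z 0 ω} := by
        rw [Measure.real, Measure.real]
        congr 1
        exact (hz.ident x).measure_mem_eq measurableSet_Ioi
      rw [this]
      linarith [Real.add_one_le_exp (μ.real {ω | u < z 0 ω} * (Real.exp t - 1))]
    calc _ ≤ ∏ x ∈ A, Real.exp (μ.real {ω | u < z 0 ω} * (Real.exp t - 1)) :=
          Finset.prod_le_prod (fun x _ => mgf_nonneg) fun x _ => hx x
      _ = _ := by rw [Finset.prod_const, ← Real.exp_nat_mul]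

lemma chernoff_upper {d : ℕ} {α : ℝ} {Ω : Type*} [MeasurableSpace Ω] {μ : Measure Ω}
    {z : (Fin d → ℤ) → Ω → ℝ} (hz : IsScenery d α μ z) (A : Finset (Fin d → ℤ)) (u m : ℝ) :
    μ.real {ω | m ≤ hcount z A u ω} ≤
      Real.exp (-m + 2 * (A.card * μ.real {ω | u < z 0 ω})) := by
  have := hz.prob
  obtain ⟨hi, hm⟩ := hcount_mgf hz A u 1
  refine (measure_ge_le_exp_mul_mgf m zero_le_one hi).trans ?_
  rw [Real.exp_add]
  have h0 : 0 ≤ A.card * μ.real {ω | u < z 0 ω} := by positivity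
  have he := Real.exp_one_lt_d9
  refine mul_le_mul (le_of_eq (by congr 1; ring)) ?_ mgf_nonneg (Real.exp_nonneg _)
  · refine hm.trans (Real.exp_le_exp.2 ?_)
    nlinarith

lemma chernoff_lower {d : ℕ} {α : ℝ} {Ω : Type*} [MeasurableSpace Ω] {μ : Measure Ω}
    {z : (Fin d → ℤ) → Ω → ℝ} (hz : IsScenery d α μ z) (A : Finset (Fin d → ℤ)) (u m : ℝ) :
    μ.real {ω | (hcount z A u ω : ℝ) ≤ m} ≤
      Real.exp (m - (A.card * μ.real {ω | u < z 0 ω}) / 2) := by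
  have := hz.prob
  obtain ⟨hi, hm⟩ := hcount_mgf hz A u (-1)
  refine (measure_le_le_exp_mul_mgf m (by norm_num) hi).trans ?_
  rw [sub_eq_add_neg, Real.exp_add]
  have h0 : 0 ≤ A.card * μ.real {ω | u < z 0 ω} := by positivity
  have he : Real.exp (-1) ≤ 1 / 2 := by
    rw [Real.exp_neg]
    have := Real.exp_one_gt_d9
    rw [inv_le_comm₀ (by positivity) (by norm_num)]
    linarith
  refine mul_le_mul (le_of_eq (by congr 1; ring)) ?_ mgf_nonneg (Real.exp_nonneg _)
  · refine hm.trans (Real.exp_le_exp.2 ?_)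
    nlinarith

lemma tail_bounds {d : ℕ} {α : ℝ} {Ω : Type*} [MeasurableSpace Ω] {μ : Measure Ω}
    {z : (Fin d → ℤ) → Ω → ℝ} (hz : IsScenery d α μ z) (hα : 0 < α) {δ : ℝ} (hδ : 0 < δ) :
    ∀ᶠ r : ℝ in atTop, r ^ (-α - δ) ≤ μ.real {ω | r < z 0 ω} ∧
      μ.real {ω | r < z 0 ω} ≤ r ^ (-α + δ) := by
  have := hz.prob
  have h1 := hz.tail.eventually (Ioo_mem_nhds (show -α - δ < -α by linarith)
    (show -α < min (-α + δ) 0 from lt_min (by linarith) (by linarith)))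
  filter_upwards [h1, eventually_gt_atTop 1] with r hr hr1
  have hl := Real.log_pos hr1
  change _ < Real.log (μ.real {ω | r < z 0 ω}) / _ ∧ Real.log (μ.real {ω | r < z 0 ω}) / _ < _ at hr
  have hp : 0 < μ.real {ω | r < z 0 ω} := by
    rcases (measureReal_nonneg (μ := μ) (s := {ω | r < z 0 ω})).eq_or_lt with h | h
    · rw [← h] at hr
      simp at hr
    · exact h
  have ha := (lt_div_iff₀ hl).1 hr.1
  have hb := (div_lt_iff₀ hl).1 (hr.2.trans_le (min_le_left _ _))
  constructor
  · rw [Real.rpow_def_of_pos (by linarith), ← Real.le_log_iff_exp_le hp]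
    linarith
  · rw [Real.rpow_def_of_pos (by linarith), ← Real.log_le_iff_le_exp hp]
    linarith

lemma asym (C c p q : ℝ) (hc : 0 < c) (hpq : p < q) (hq : 0 < q) :
    ∀ᶠ x : ℝ in atTop, C * x ^ p + 3 * Real.log x ≤ c * x ^ q := by
  have h1 : ∀ᶠ x : ℝ in atTop, 2 * C / c ≤ x ^ (q - p) :=
    (tendsto_rpow_atTop (sub_pos.2 hpq)).eventually_ge_atTop _
  have h2 := ((isLittleO_log_rpow_atTop hq).const_mul_left 3).bound (half_pos hc)
  filter_upwards [h1, h2, eventually_gt_atTop 0] with x hx1 hx2 hx0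
  rw [Real.norm_of_nonneg (Real.rpow_nonneg hx0.le q)] at hx2
  have h3 := (le_abs_self _).trans hx2
  have h4 : x ^ q = x ^ p * x ^ (q - p) := by
    rw [← Real.rpow_add hx0]; congr 1; ring
  have h5 : C ≤ c / 2 * x ^ (q - p) := by
    rw [div_le_iff₀ hc] at hx1
    linarith
  have h6 := mul_le_mul_of_nonneg_left h5 (Real.rpow_nonneg hx0.le p)
  have h7 : x ^ p * (c / 2 * x ^ (q - p)) = c / 2 * x ^ q := by rw [h4]; ring
  linarith

lemma exp_final {x K A B : ℝ} (hx : 1 ≤ x) (hK : 1 ≤ K) (h : A + 3 * Real.log x ≤ B) :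
    Real.exp (K * A - K * B) ≤ 1 / x ^ 3 := by
  have hl := Real.log_nonneg hx
  have hx0 : 0 < x := by linarith
  have h1 : Real.exp (-(3 * Real.log x)) = 1 / x ^ 3 := by
    rw [Real.exp_neg, one_div]
    congr 1
    rw [show 3 * Real.log x = ((3 : ℕ) : ℝ) * Real.log x by norm_num, Real.exp_nat_mul,
      Real.exp_log hx0]
  rw [← h1, Real.exp_le_exp]
  nlinarith

lemma rpow_succ_sub {x a : ℝ} (hx : 1 ≤ x) (ha : 0 ≤ a) (ha1 : a ≤ 1) :
    x * ((x + 1) ^ a - x ^ a) ≤ x ^ a := by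
  have hx0 : 0 < x := by linarith
  have h := rpow_one_add_le_one_add_mul_self (s := 1 / x) (p := a)
    (by have : 0 < 1 / x := by positivity
        linarith) ha ha1
  have h2 : (x + 1) ^ a = x ^ a * (1 + 1 / x) ^ a := by
    rw [← Real.mul_rpow hx0.le (by positivity)]
    congr 1
    field_simp
  rw [h2]
  have h3 : 0 < x ^ a := by positivity
  have h4 : x * (1 + a * (1 / x)) = x + a := by field_simp
  have h5 : x ^ a * (x * (1 + 1 / x) ^ a) ≤ x ^ a * (x + 1) := by
    gcongr
    nlinarith
  nlinarith

lemma width {x a : ℝ} {k : ℕ} (hx : 1 ≤ x) (ha : 0 ≤ a) (ha1 : a ≤ 1) (hk : (k : ℝ) + 1 ≤ x / 4) :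
    ((k : ℝ) + 1) * ((x + 1) ^ a - x ^ a) ≤ x ^ a / 4 := by
  have h := rpow_succ_sub hx ha ha1
  have h2 : x ^ a ≤ (x + 1) ^ a := Real.rpow_le_rpow (by linarith) (by linarith) ha
  nlinarith

lemma bad_lower {d : ℕ} (hd : 3 ≤ d) {α ρ ε : ℝ} (hα : 0 < α) (hρ : 0 < ρ) (hε : 0 < ε)
    (hε' : α * ρ / d + ε < 1 / 2) {Ω : Type*} [MeasurableSpace Ω] {μ : Measure Ω}
    {z : (Fin d → ℤ) → Ω → ℝ} (hz : IsScenery d α μ z) :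
    ∀ᶠ x : ℝ in atTop, ∀ k : ℕ, 1 ≤ k → (k : ℝ) + 1 ≤ x / 4 →
      μ.real {ω | (hcount z (ann d (k * (x + 1) ^ (α * ρ / d + ε)) ((k + 1) * x ^ (α * ρ / d + ε)))
        ((x + 1) ^ ρ) ω : ℝ) ≤ (k : ℝ) ^ (d - 1) * (x + 1) ^ (((d : ℝ) - 1) * ε)} ≤ 1 / x ^ 3 := by
  have hd0 : (3 : ℝ) ≤ d := by exact_mod_cast hd
  set a := α * ρ / d + ε with ha
  have ha0 : 0 < a := by positivity
  have hV := eball_pos d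
  set V := volume.real (eball d 1)
  have hδ : 0 < ε / (4 * ρ) := by positivity
  have E1 : ∀ᶠ x : ℝ in atTop, 8 * Real.sqrt d ≤ x ^ a :=
    (tendsto_rpow_atTop ha0).eventually_ge_atTop _
  have E2 := ((tendsto_rpow_atTop hρ).comp (tendsto_atTop_add_const_right atTop (1 : ℝ)
    tendsto_id)).eventually (tail_bounds hz hα hδ)
  have E3 := asym (2 ^ (((d : ℝ) - 1) * ε)) (V / 4 * 2 ^ (-α * ρ - ε / 4)) (((d : ℝ) - 1) * ε)
    (((d : ℝ) - 1 / 4) * ε) (by positivity) (by nlinarith) (by nlinarith)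
  filter_upwards [E1, E2, E3, eventually_ge_atTop 1] with x e1 e2 e3 hx k hk hkx
  have hx0 : 0 < x := by linarith
  have hs : 0 < x ^ a := by positivity
  have hss : x ^ a ≤ (x + 1) ^ a := Real.rpow_le_rpow hx0.le (by linarith) ha0.le
  have hcard := ann_thin d (by omega) k (x ^ a) ((x + 1) ^ a) hs hss
    (width hx ha0.le (by linarith) hkx) (by linarith)
  have hp := e2.1
  simp only [Function.comp, id] at hp
  refine (chernoff_lower hz _ _ _).trans ?_
  have hK : (1 : ℝ) ≤ (k : ℝ) ^ (d - 1) := one_le_pow₀ (by exact_mod_cast hk)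
  refine le_trans (Real.exp_le_exp.2 ?_) (exp_final hx hK e3)
  have hp2 : 2 ^ (-α * ρ - ε / 4) * x ^ (-α * ρ - ε / 4) ≤ μ.real {ω | (x + 1) ^ ρ < z 0 ω} := by
    refine le_trans ?_ hp
    rw [← Real.rpow_mul (by linarith), ← Real.mul_rpow (by norm_num) hx0.le,
      show ρ * (-α - ε / (4 * ρ)) = -α * ρ - ε / 4 by field_simp]
    apply Real.rpow_le_rpow_of_nonpos (by linarith) (by linarith)
    nlinarith [mul_pos hα hρ]
  have hm : (x + 1) ^ (((d : ℝ) - 1) * ε) ≤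
      2 ^ (((d : ℝ) - 1) * ε) * x ^ (((d : ℝ) - 1) * ε) := by
    rw [← Real.mul_rpow (by norm_num) hx0.le]
    exact Real.rpow_le_rpow (by linarith) (by linarith) (by nlinarith)
  have hmul := mul_le_mul hcard hp2 (by positivity) (by positivity)
  have hpow : (x ^ a) ^ d * x ^ (-α * ρ - ε / 4) = x ^ (((d : ℝ) - 1 / 4) * ε) := by
    rw [← Real.rpow_mul_natCast hx0.le, ← Real.rpow_add hx0]
    congr 1
    rw [ha]
    field_simp
    ring
  have h1 : (k : ℝ) ^ (d - 1) * (V / 4 * 2 ^ (-α * ρ - ε / 4) * x ^ (((d : ℝ) - 1 / 4) * ε)) =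
     (V / 2 * ((k : ℝ) ^ (d - 1) * (x ^ a) ^ d) * (2 ^ (-α * ρ - ε / 4) * x ^ (-α * ρ - ε / 4))) / 2 := by
    rw [← hpow]; ring
  rw [h1]
  have h2 := mul_le_mul_of_nonneg_left hm (zero_le_one.trans hK)
  linarith

lemma bad_upper {d : ℕ} (hd : 3 ≤ d) {α ρ ε : ℝ} (hα : 0 < α) (hρ : 0 < ρ) (hε : 0 < ε)
    (hε' : α * ρ / d + ε < 1 / 2) {Ω : Type*} [MeasurableSpace Ω] {μ : Measure Ω}
    {z : (Fin d → ℤ) → Ω → ℝ} (hz : IsScenery d α μ z) :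
    ∀ᶠ x : ℝ in atTop, ∀ k : ℕ, 1 ≤ k → (k : ℝ) + 1 ≤ x / 4 →
      μ.real {ω | (k : ℝ) ^ (d - 1) * x ^ (((d : ℝ) + 1) * ε) ≤
        (hcount z (ann d (k * x ^ (α * ρ / d + ε)) ((k + 1) * (x + 1) ^ (α * ρ / d + ε)))
        (x ^ ρ / 2) ω : ℝ)} ≤ 1 / x ^ 3 := by
  have hd0 : (3 : ℝ) ≤ d := by exact_mod_cast hd
  set a := α * ρ / d + ε with ha
  have ha0 : 0 < a := by positivity
  have hV := eball_pos d
  set V := volume.real (eball d 1)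
  have hδ : 0 < ε / (4 * ρ) := by positivity
  have E1 : ∀ᶠ x : ℝ in atTop, 8 * Real.sqrt d ≤ x ^ a :=
    (tendsto_rpow_atTop ha0).eventually_ge_atTop _
  have E2 := ((tendsto_rpow_atTop hρ).atTop_div_const (show (0 : ℝ) < 2 by norm_num)).eventually
    (tail_bounds hz hα hδ)
  set W := V * (2 * d * 3 ^ (d - 1)) with hW
  set c := (2 : ℝ) ^ (-α + ε / (4 * ρ)) with hc
  have E3 := asym (2 * W / c) 1 (((d : ℝ) + 1 / 4) * ε)
    (((d : ℝ) + 1) * ε) (by positivity) (by nlinarith) (by nlinarith)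
  filter_upwards [E1, E2, E3, eventually_ge_atTop 1] with x e1 e2 e3 hx k hk hkx
  have hx0 : 0 < x := by linarith
  have hs : 0 < x ^ a := by positivity
  have hss : x ^ a ≤ (x + 1) ^ a := Real.rpow_le_rpow hx0.le (by linarith) ha0.le
  have hcard := ann_fat d (by omega) k hk (x ^ a) ((x + 1) ^ a) hs hss
    (width hx ha0.le (by linarith) hkx) (by linarith)
  have hp := e2.2
  refine (chernoff_upper hz _ _ _).trans ?_
  have hK : (1 : ℝ) ≤ (k : ℝ) ^ (d - 1) := one_le_pow₀ (by exact_mod_cast hk)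
  refine le_trans (Real.exp_le_exp.2 ?_) (exp_final hx hK e3)
  rw [Real.div_rpow (by positivity) (by norm_num), ← Real.rpow_mul hx0.le,
      show ρ * (-α + ε / (4 * ρ)) = -α * ρ + ε / 4 by field_simp] at hp
  have hmul := mul_le_mul hcard hp (by positivity) (by positivity)
  have hpow : (x ^ a) ^ d * x ^ (-α * ρ + ε / 4) = x ^ (((d : ℝ) + 1 / 4) * ε) := by
    rw [← Real.rpow_mul_natCast hx0.le, ← Real.rpow_add hx0]
    congr 1
    rw [ha]
    field_simp
    ring
  have h1 : (k : ℝ) ^ (d - 1) * (2 * W / c * x ^ (((d : ℝ) + 1 / 4) * ε)) =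
     2 * (W * ((k : ℝ) ^ (d - 1) * (x ^ a) ^ d) * (x ^ (-α * ρ + ε / 4) / c)) := by
    rw [← hpow]; ring
  rw [h1]
  linarith

lemma bc {Ω : Type*} [MeasurableSpace Ω] {μ : Measure Ω} [IsFiniteMeasure μ]
    (F : ℕ → ℕ → Set Ω)
    (h : ∀ᶠ x : ℝ in atTop, ∀ n : ℕ, (n : ℝ) = x → ∀ k : ℕ, 1 ≤ k → (k : ℝ) + 1 ≤ x / 4 →
      μ.real (F n k) ≤ 1 / x ^ 3) :
    ∀ᵐ ω ∂μ, ∀ᶠ n : ℕ in atTop, ∀ k : ℕ, 1 ≤ k → (k : ℝ) + 1 ≤ (n : ℝ) / 4 → ω ∉ F n k := by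
  obtain ⟨N, hN⟩ := eventually_atTop.1 (tendsto_natCast_atTop_atTop.eventually h)
  let G : ℕ → Set Ω := fun n => ⋃ k ∈ (Finset.range n).filter
    (fun k : ℕ => N ≤ n ∧ 1 ≤ k ∧ (k : ℝ) + 1 ≤ (n : ℝ) / 4), F n k
  have hG : ∀ n, μ.real (G n) ≤ 1 / (n : ℝ) ^ 2 := by
    intro n
    refine (measureReal_biUnion_finset_le _ _).trans ?_
    calc _ ≤ ∑ k ∈ (Finset.range n).filter
            (fun k : ℕ => N ≤ n ∧ 1 ≤ k ∧ (k : ℝ) + 1 ≤ (n : ℝ) / 4), 1 / (n : ℝ) ^ 3 := by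
          apply Finset.sum_le_sum
          intro k hk
          have hk' := (Finset.mem_filter.1 hk).2
          exact hN n hk'.1 n rfl k hk'.2.1 hk'.2.2
      _ ≤ ∑ k ∈ Finset.range n, 1 / (n : ℝ) ^ 3 :=
          Finset.sum_le_sum_of_subset_of_nonneg (Finset.filter_subset _ _)
            (fun _ _ _ => by positivity)
      _ = 1 / (n : ℝ) ^ 2 := by
          rcases Nat.eq_zero_or_pos n with rfl | hn
          · simp
          · have : (n : ℝ) ≠ 0 := by positivity
            simp
            field_simp
  have hsum : ∑' n, μ (G n) ≠ ⊤ := by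
    have hs : Summable fun n : ℕ => 1 / (n : ℝ) ^ 2 :=
      Real.summable_one_div_nat_pow.2 one_lt_two
    refine ne_top_of_le_ne_top hs.tsum_ofReal_ne_top (ENNReal.tsum_le_tsum fun n => ?_)
    rw [← ofReal_measureReal (measure_ne_top μ _)]
    exact ENNReal.ofReal_le_ofReal (hG n)
  filter_upwards [ae_eventually_notMem hsum] with ω hω
  filter_upwards [hω, eventually_ge_atTop N] with n hn hNn k hk hkn hF
  apply hn
  simp only [G, mem_iUnion]
  refine ⟨k, Finset.mem_filter.2 ⟨Finset.mem_range.2 ?_, hNn, hk, hkn⟩, hF⟩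
  have : (k : ℝ) < n := by
    have : (0 : ℝ) ≤ n := Nat.cast_nonneg n
    linarith
  exact_mod_cast this

/-- Lemma (number of high points in annuli): for `d ≥ 3`, `0 < α < d/2`,
`ρ ∈ (max(1/α,1), d/(2α))` and `ε > 0` with `αρ/d + ε < 1/2`, ℙ-a.s., for all large `t`
and all `1 ≤ k ≤ t^{1/2−αρ/d−ε}`, the number of points of the annulus
`D(k) = {x : k t^{αρ/d+ε} ≤ |x| < (k+1) t^{αρ/d+ε}}` with `z(x) ≥ t^ρ` lies strictly
between `k^{d−1} t^{(d−1)ε}` and `k^{d−1} t^{(d+1)ε}`. -/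
theorem stmt16 (d : ℕ) (hd : 3 ≤ d) (α ρ ε : ℝ) (hα : 0 < α) (hαd : α < d / 2)
    (hρ₁ : max (1 / α) 1 < ρ) (hρ₂ : ρ < d / (2 * α))
    (hε : 0 < ε) (hε' : α * ρ / d + ε < 1 / 2)
    {Ωz : Type*} [MeasurableSpace Ωz]
    (μ : Measure Ωz) (z : (Fin d → ℤ) → Ωz → ℝ) (hz : IsScenery d α μ z) :
    ∀ᵐ ζ ∂ μ, ∀ᶠ t in (atTop : Filter ℝ), ∀ k : ℕ, 1 ≤ k →
      (k : ℝ) ≤ t ^ ((1 : ℝ) / 2 - α * ρ / d - ε) →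
      (k : ℝ) ^ (d - 1) * t ^ (((d : ℝ) - 1) * ε)
          < (Set.ncard {x : Fin d → ℤ |
              ((k : ℝ) * t ^ (α * ρ / d + ε) ≤ euclNorm d x ∧
                euclNorm d x < ((k : ℝ) + 1) * t ^ (α * ρ / d + ε)) ∧
              t ^ ρ ≤ z x ζ} : ℝ) ∧
      (Set.ncard {x : Fin d → ℤ |
              ((k : ℝ) * t ^ (α * ρ / d + ε) ≤ euclNorm d x ∧
                euclNorm d x < ((k : ℝ) + 1) * t ^ (α * ρ / d + ε)) ∧
              t ^ ρ ≤ z x ζ} : ℝ)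
          < (k : ℝ) ^ (d - 1) * t ^ (((d : ℝ) + 1) * ε) := by
  classical
  have := hz.prob
  have hρ : 0 < ρ := lt_trans (by norm_num) ((le_max_right _ _).trans_lt hρ₁)
  have hd0 : (3 : ℝ) ≤ d := by exact_mod_cast hd
  have hL := bc (μ := μ) (fun n k => {ω | (hcount z (ann d (k * ((n : ℝ) + 1) ^ (α * ρ / d + ε))
    ((k + 1) * (n : ℝ) ^ (α * ρ / d + ε))) (((n : ℝ) + 1) ^ ρ) ω : ℝ) ≤
      (k : ℝ) ^ (d - 1) * ((n : ℝ) + 1) ^ (((d : ℝ) - 1) * ε)}) (by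
    filter_upwards [bad_lower hd hα hρ hε hε' hz] with x hx n hn k hk hkx
    subst hn
    exact hx k hk hkx)
  have hU := bc (μ := μ) (fun n k => {ω | (k : ℝ) ^ (d - 1) * (n : ℝ) ^ (((d : ℝ) + 1) * ε) ≤
        (hcount z (ann d (k * (n : ℝ) ^ (α * ρ / d + ε)) ((k + 1) * ((n : ℝ) + 1) ^ (α * ρ / d + ε)))
        ((n : ℝ) ^ ρ / 2) ω : ℝ)}) (by
    filter_upwards [bad_upper hd hα hρ hε hε' hz] with x hx n hn k hk hkx
    subst hn
    exact hx k hk hkx)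
  have ha0 : 0 < α * ρ / d + ε := by positivity
  rw [show (1 : ℝ) / 2 - α * ρ / d - ε = 1 / 2 - (α * ρ / d + ε) by ring]
  set a := α * ρ / d + ε with ha
  filter_upwards [hL, hU] with ζ h1 h2
  filter_upwards [tendsto_nat_floor_atTop.eventually h1, tendsto_nat_floor_atTop.eventually h2,
    eventually_ge_atTop 100] with t g1 g2 ht k hk hkt
  set n := ⌊t⌋₊
  have ht0 : 0 < t := by linarith
  have hn1 : (n : ℝ) ≤ t := Nat.floor_le ht0.le
  have hn2 : t < n + 1 := Nat.lt_floor_add_one t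
  have hn0 : 0 < (n : ℝ) := by linarith
  have hkn : (k : ℝ) + 1 ≤ (n : ℝ) / 4 := by
    have hk2 : (k : ℝ) ≤ Real.sqrt t := by
      rw [Real.sqrt_eq_rpow]
      exact hkt.trans (Real.rpow_le_rpow_of_exponent_le (by linarith) (by linarith))
    have h3 : Real.sqrt t * Real.sqrt t = t := Real.mul_self_sqrt ht0.le
    have h4 : (10 : ℝ) ≤ Real.sqrt t := Real.le_sqrt_of_sq_le (by norm_num; linarith)
    nlinarith
  have k1 := g1 k hk hkn
  have k2 := g2 k hk hkn
  simp only [not_le, hcount_eq] at k1 k2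
  have hk0 : (0 : ℝ) < k := by exact_mod_cast hk
  have p1 : (n : ℝ) ^ a ≤ t ^ a := Real.rpow_le_rpow hn0.le hn1 ha0.le
  have p2 : t ^ a ≤ ((n : ℝ) + 1) ^ a := Real.rpow_le_rpow ht0.le hn2.le ha0.le
  have r1 : (n : ℝ) ^ ρ ≤ t ^ ρ := Real.rpow_le_rpow hn0.le hn1 hρ.le
  have r2 : t ^ ρ ≤ ((n : ℝ) + 1) ^ ρ := Real.rpow_le_rpow ht0.le hn2.le hρ.le
  have r0 : 0 < (n : ℝ) ^ ρ := by positivity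
  set S := {x : Fin d → ℤ | ((k : ℝ) * t ^ a ≤ euclNorm d x ∧
    euclNorm d x < ((k : ℝ) + 1) * t ^ a) ∧ t ^ ρ ≤ z x ζ} with hS
  have hSfin : S.Finite := (ann_finite d (k * t ^ a) ((k + 1) * t ^ a)).subset fun x hx => hx.1
  constructor
  · calc _ ≤ (k : ℝ) ^ (d - 1) * ((n : ℝ) + 1) ^ (((d : ℝ) - 1) * ε) := by
          gcongr
          nlinarith
      _ < _ := k1
      _ ≤ _ := by
          refine Nat.cast_le.2 (Set.ncard_le_ncard ?_ hSfin)
          rintro x ⟨hx, hxz⟩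
          rw [mem_ann] at hx
          refine ⟨⟨le_trans ?_ hx.1, hx.2.trans_le ?_⟩, r2.trans hxz.le⟩
          · gcongr
          · gcongr
  · refine lt_of_le_of_lt ?_ (k2.trans_le ?_)
    · refine Nat.cast_le.2 (Set.ncard_le_ncard ?_
        ((Finset.finite_toSet (ann d _ _)).subset fun x hx => hx.1))
      rintro x ⟨hx, hxz⟩
      refine ⟨mem_ann.2 ⟨le_trans ?_ hx.1, hx.2.trans_le ?_⟩, by linarith⟩
      · gcongr
      · gcongr
    · gcongr
end
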